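/- There exists a constant C > 0 such that for every squared Horton set H of n points, every point q of the plane stabs at most C·n empty triangles of H. -/

import Mathlib

open scoped Classical

noncomputable section

/-- Euclidean distance between two points of the plane `ℝ × ℝ`. -/
def elen (p q : ℝ × ℝ) : ℝ := Real.sqrt ((p.1 - q.1) ^ 2 + (p.2 - q.2) ^ 2)

/-- Orientation determinant of an ordered triple of points. -/
def orient (a b c : ℝ × ℝ) : ℝ :=
  (b.1 - a.1) * (c.2 - a.2) - (b.2 - a.2) * (c.1 - a.1)

/-- A planar point set is in general position if no three distinct points are collinear. -/
def GeneralPosition (S : Set (ℝ × ℝ)) : Prop :=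
  ∀ a ∈ S, ∀ b ∈ S, ∀ c ∈ S, a ≠ b → a ≠ c → b ≠ c →
    ¬ Collinear ℝ ({a, b, c} : Set (ℝ × ℝ))

/-- No two points of `S` share an `x`-coordinate. -/
def DistinctX (S : Set (ℝ × ℝ)) : Prop :=
  ∀ a ∈ S, ∀ b ∈ S, a ≠ b → a.1 ≠ b.1

/-- `p` lies strictly below the (non-vertical) line through `a` and `b`, where `a.1 < b.1`. -/
def StrictlyBelow (p a b : ℝ × ℝ) : Prop :=
  (b.1 - a.1) * (p.2 - a.2) < (b.2 - a.2) * (p.1 - a.1)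

/-- `p` lies strictly above the (non-vertical) line through `a` and `b`, where `a.1 < b.1`. -/
def StrictlyAbove (p a b : ℝ × ℝ) : Prop :=
  (b.2 - a.2) * (p.1 - a.1) < (b.1 - a.1) * (p.2 - a.2)

/-- `Y` is high above `X`: every line through two points of `Y` is above every point of `X`. -/
def HighAbove (Y X : Set (ℝ × ℝ)) : Prop :=
  ∀ a ∈ Y, ∀ b ∈ Y, a.1 < b.1 → ∀ p ∈ X, StrictlyBelow p a b

/-- `X` is deep below `Y`: every line through two points of `X` is below every point of `Y`. -/
def DeepBelow (X Y : Set (ℝ × ℝ)) : Prop :=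
  ∀ a ∈ X, ∀ b ∈ X, a.1 < b.1 → ∀ p ∈ Y, StrictlyAbove p a b

/-- The even-indexed points of `H` in increasing order of `x`-coordinate (`H₀`). -/
def evenPart (H : Finset (ℝ × ℝ)) : Finset (ℝ × ℝ) :=
  H.filter fun p => Even (H.filter fun q => q.1 < p.1).card

/-- The odd-indexed points of `H` in increasing order of `x`-coordinate (`H₁`). -/
def oddPart (H : Finset (ℝ × ℝ)) : Finset (ℝ × ℝ) :=
  H.filter fun p => ¬ Even (H.filter fun q => q.1 < p.1).card

/-- Horton sets. -/
inductive IsHorton : Finset (ℝ × ℝ) → Prop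
  | small (H : Finset (ℝ × ℝ)) (hgp : GeneralPosition ↑H) (hx : DistinctX ↑H)
      (hcard : H.card ≤ 2) : IsHorton H
  | split (H : Finset (ℝ × ℝ)) (hgp : GeneralPosition ↑H) (hx : DistinctX ↑H)
      (hcard : 2 < H.card) (h0 : IsHorton (evenPart H)) (h1 : IsHorton (oddPart H))
      (hhigh : HighAbove ↑(oddPart H) ↑(evenPart H))
      (hdeep : DeepBelow ↑(evenPart H) ↑(oddPart H)) : IsHorton H

/-- `t` is an empty triangle of the point set `S`: a three-element non-collinear subset of `S`
whose open interior contains no point of `S`. -/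
def IsEmptyTriangleOf (S : Set (ℝ × ℝ)) (t : Finset (ℝ × ℝ)) : Prop :=
  t.card = 3 ∧ (↑t : Set (ℝ × ℝ)) ⊆ S ∧ ¬ Collinear ℝ (↑t : Set (ℝ × ℝ)) ∧
    ∀ p ∈ S, p ∉ interior (convexHull ℝ (↑t : Set (ℝ × ℝ)))

/-- `τ S`: the number of empty triangles of `S`. -/
def tau (S : Set (ℝ × ℝ)) : ℕ :=
  {t : Finset (ℝ × ℝ) | IsEmptyTriangleOf S t}.ncard

/-- The number of empty triangles of `S` stabbed by the point `q`. -/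
def stabbedCount (S : Set (ℝ × ℝ)) (q : ℝ × ℝ) : ℕ :=
  {t : Finset (ℝ × ℝ) | IsEmptyTriangleOf S t ∧
    q ∈ interior (convexHull ℝ (↑t : Set (ℝ × ℝ)))}.ncard

/-- The number of empty triangles of `S` having `q` as a vertex. -/
def incidentCount (S : Set (ℝ × ℝ)) (q : ℝ × ℝ) : ℕ :=
  {t : Finset (ℝ × ℝ) | IsEmptyTriangleOf S t ∧ q ∈ t}.ncard

/-- The `m × m` integer grid `{1,…,m} × {1,…,m}`, viewed inside `ℝ × ℝ`. -/
def grid (m : ℕ) : Finset (ℝ × ℝ) :=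
  (Finset.Icc 1 m ×ˢ Finset.Icc 1 m).image fun p => ((p.1 : ℝ), (p.2 : ℝ))

/-- The points of the grid on the line spanned by `a` and `b`. -/
def gridLine (m : ℕ) (a b : ℝ × ℝ) : Finset (ℝ × ℝ) :=
  (grid m).filter fun x => Collinear ℝ ({a, b, x} : Set (ℝ × ℝ))

/-- Rotation of the plane by (minus) 90 degrees. -/
def rotCW (p : ℝ × ℝ) : ℝ × ℝ := (p.2, -p.1)

/-- `f` is an `ε`-perturbation of the grid `{1,…,m} × {1,…,m}` turning it into a
squared Horton set (of `m ^ 2` points). -/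
structure IsSquaredHorton (m : ℕ) (ε : ℝ) (f : ℝ × ℝ → ℝ × ℝ) : Prop where
  eps_pos : 0 < ε
  eps_lt : ε < 1 / 4
  inj : Set.InjOn f ↑(grid m)
  close : ∀ p ∈ grid m, elen (f p) p ≤ ε
  orient_iff : ∀ a ∈ grid m, ∀ b ∈ grid m, ∀ c ∈ grid m,
    orient a b c ≠ 0 → (0 < orient a b c ↔ 0 < orient (f a) (f b) (f c))
  nonvertical : ∀ a ∈ grid m, ∀ b ∈ grid m, a ≠ b → a.1 ≠ b.1 →
    IsHorton ((gridLine m a b).image f)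
  vertical : ∀ a ∈ grid m, ∀ b ∈ grid m, a ≠ b → a.1 = b.1 →
    IsHorton (((gridLine m a b).image f).image rotCW)

/-!
Join a point `c` that lies beyond a Horton set `X` to the edges of `X`, and keep the empty triangles
containing `q`. Their edges overlap pairwise, and as there is no point of `X` between such an edge
and `c`, at most one of them has an endpoint in the half of `X` farther from `c`; by recursion there
are `O(log |X|)` of them. Applied to the triangles with vertices in both halves of `X`, this shows
that `q` stabs `O(|X| log² |X|)` empty triangles of `X`.

In a squared Horton set, consider the longest side of an empty triangle, measured in lattice steps,
and its primitive direction `v`. The interior of the triangle contains no lattice point, so the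
third vertex is at most two lattice lines away from that side; and since all triangles share `q`,
those of direction `v` involve boundedly many lattice lines. Each of these lines carries a Horton
set of at most `K = ⌊m / r⌋ + 1` points, where `r` is the supremum norm of `v`, so that `q` stabs
`O(K log² K)` triangles of direction `v`. There are at most `8 r` directions of norm `r`, and
`∑ r K log² K` over `r ≤ m` is `O(m²)` because `log² K` is `O(√(m / r))`.
-/

section Orientation

lemma orient_rotate (a b c : ℝ × ℝ) : orient b c a = orient a b c := by
  unfold orient; ring

lemma orient_swap (a b c : ℝ × ℝ) : orient b a c = -orient a b c := by
  unfold orient; ring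

lemma orient_self_left (a b : ℝ × ℝ) : orient a a b = 0 := by
  unfold orient; ring

lemma orient_self_right (a b : ℝ × ℝ) : orient a b b = 0 := by
  unfold orient; ring

lemma orient_self_outer (a b : ℝ × ℝ) : orient a b a = 0 := by
  unfold orient; ring

lemma orient_eq_add_add (a b c p : ℝ × ℝ) :
    orient a b c = orient b c p + orient c a p + orient a b p := by
  unfold orient; ring

lemma orient_plucker (c a b p q : ℝ × ℝ) :
    orient c a b * orient c p q - orient c a p * orient c b q +
      orient c a q * orient c b p = 0 := by
  unfold orient; ring

lemma orient_combination {s t u : ℝ} (h : s + t + u = 1) (a b c x y : ℝ × ℝ) :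
    orient x y (s • a + t • b + u • c) =
      s * orient x y a + t * orient x y b + u * orient x y c := by
  obtain rfl : u = 1 - s - t := by linarith
  simp only [orient, Prod.fst_add, Prod.snd_add, Prod.smul_fst, Prod.smul_snd, smul_eq_mul]
  ring

lemma orient_mul_orient (a b c x y q : ℝ × ℝ) :
    orient a b c * orient x y q =
      orient b c q * orient x y a + orient c a q * orient x y b + orient a b q * orient x y c := by
  unfold orient; ring

lemma collinear_triple_iff_orient_eq_zero (a b c : ℝ × ℝ) :
    Collinear ℝ {a, b, c} ↔ orient a b c = 0 := by
  rw [collinear_iff_of_mem (Set.mem_insert a {b, c})]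
  constructor
  · rintro ⟨v, hv⟩
    obtain ⟨s, rfl⟩ := hv b (by simp)
    obtain ⟨t, rfl⟩ := hv c (by simp)
    simp only [orient, vadd_eq_add, Prod.fst_add, Prod.snd_add, Prod.smul_fst, Prod.smul_snd,
      smul_eq_mul]
    ring
  · intro h
    rcases eq_or_ne a b with rfl | hab
    · exact ⟨c - a, by simpa using ⟨1, by simp⟩⟩
    have hnorm : (b.1 - a.1) ^ 2 + (b.2 - a.2) ^ 2 ≠ 0 := fun h0 ↦ hab <| Prod.ext
      (by nlinarith [sq_nonneg (b.1 - a.1), sq_nonneg (b.2 - a.2)])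
      (by nlinarith [sq_nonneg (b.1 - a.1), sq_nonneg (b.2 - a.2)])
    refine ⟨b - a, ?_⟩
    simp only [Set.mem_insert_iff, Set.mem_singleton_iff, forall_eq_or_imp, forall_eq]
    refine ⟨⟨0, by simp⟩, ⟨1, by simp⟩, ((b.1 - a.1) * (c.1 - a.1) + (b.2 - a.2) * (c.2 - a.2)) /
      ((b.1 - a.1) ^ 2 + (b.2 - a.2) ^ 2), ?_⟩
    unfold orient at h
    ext <;> simp only [vadd_eq_add, Prod.fst_add, Prod.snd_add, Prod.smul_fst, Prod.smul_snd,
      Prod.fst_sub, Prod.snd_sub, smul_eq_mul] <;> field_simp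
    · linear_combination (a.2 - b.2) * h
    · linear_combination (b.1 - a.1) * h

/-- `q` lies strictly inside the triangle `abc`, whose vertices are listed counterclockwise. -/
def InTriangle (a b c q : ℝ × ℝ) : Prop :=
  0 < orient a b q ∧ 0 < orient b c q ∧ 0 < orient c a q

lemma InTriangle.rotate {a b c q : ℝ × ℝ} (h : InTriangle a b c q) : InTriangle b c a q :=
  ⟨h.2.1, h.2.2, h.1⟩

lemma InTriangle.orient_pos {a b c q : ℝ × ℝ} (h : InTriangle a b c q) : 0 < orient a b c := by
  rw [orient_eq_add_add a b c q]
  linarith [h.1, h.2.1, h.2.2]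

lemma InTriangle.orient_neg {a b c q x y : ℝ × ℝ} (h : InTriangle a b c q)
    (ha : orient x y a < 0) (hb : orient x y b < 0) (hc : orient x y c < 0) :
    orient x y q < 0 := by
  refine neg_of_mul_neg_right ?_ h.orient_pos.le
  rw [orient_mul_orient]
  linarith [mul_neg_of_pos_of_neg h.1 hc, mul_neg_of_pos_of_neg h.2.1 ha,
    mul_neg_of_pos_of_neg h.2.2 hb]

lemma affineIndependent_triple_iff_orient_ne_zero (a b c : ℝ × ℝ) :
    AffineIndependent ℝ ![a, b, c] ↔ orient a b c ≠ 0 := by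
  rw [affineIndependent_iff_not_collinear_set, collinear_triple_iff_orient_eq_zero]

lemma mem_interior_convexHull_triple_iff {a b c : ℝ × ℝ} (h : 0 < orient a b c) (q : ℝ × ℝ) :
    q ∈ interior (convexHull ℝ {a, b, c}) ↔ InTriangle a b c q := by
  have hind := (affineIndependent_triple_iff_orient_ne_zero a b c).2 h.ne'
  obtain ⟨B, hB⟩ : ∃ B : AffineBasis (Fin 3) ℝ (ℝ × ℝ), ⇑B = ![a, b, c] :=
    ⟨⟨_, hind, hind.affineSpan_eq_top_iff_card_eq_finrank_add_one.2 (by simp)⟩, rfl⟩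
  have hrange : Set.range B = {a, b, c} := by
    rw [hB, Matrix.range_cons, Matrix.range_cons_cons_empty, Set.singleton_union]
  have hcomb := B.linear_combination_coord_eq_self q
  have hsum := B.sum_coord_apply_eq_one q
  simp only [hB, Fin.sum_univ_three, Matrix.cons_val] at hcomb hsum
  have horient (x y : ℝ × ℝ) := hcomb ▸ orient_combination hsum a b c x y
  have hab : orient a b q = B.coord 2 q * orient a b c := by
    simp [horient, orient_self_outer, orient_self_right]
  have hbc : orient b c q = B.coord 0 q * orient a b c := by
    simp [horient, orient_self_outer, orient_self_right, orient_rotate]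
  have hca : orient c a q = B.coord 1 q * orient a b c := by
    simp [horient, orient_self_outer, orient_self_right, orient_rotate]
  rw [← hrange, B.interior_convexHull, InTriangle, hab, hbc, hca]
  simp only [Set.mem_ofPred_eq, Fin.forall_fin_succ, Fin.succ_zero_eq_one, Fin.succ_one_eq_two,
    IsEmpty.forall_iff, and_true, mul_pos_iff_of_pos_right h]
  tauto

end Orientation

section HortonFamily

variable {ι K : Type*} [LinearOrder K] {P : ι → ℝ × ℝ} {κ : ι → K}

/-- Strictly between any two members of `S`, in the order given by the key `κ`, there is a member
of `T`. -/
def Interleaves (κ : ι → K) (T S : Finset ι) : Prop :=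
  ∀ a ∈ S, ∀ b ∈ S, κ a < κ b → ∃ p ∈ T, κ p ∈ Set.Ioo (κ a) (κ b)

lemma Interleaves.card_le {S T : Finset ι} (h : Interleaves κ T S) (hinj : Set.InjOn κ S) :
    S.card ≤ T.card + 1 := by
  rw [← Finset.card_image_of_injOn hinj]
  refine (Finset.card_le_of_interleaved fun x hx y hy hxy _ ↦ ?_).trans
    (Nat.add_le_add_right (Finset.card_image_le (f := κ) (s := T)) 1)
  obtain ⟨a, ha, rfl⟩ := Finset.mem_image.1 hx
  obtain ⟨b, hb, rfl⟩ := Finset.mem_image.1 hy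
  obtain ⟨p, hp, hlt⟩ := h a ha b hb hxy
  exact ⟨κ p, Finset.mem_image_of_mem κ hp, hlt⟩

lemma Interleaves.comap {η K' : Type*} [LinearOrder K'] [DecidableEq η] {κ' : η → K'} {g : ι → η}
    {X : Finset ι} {S T : Finset η} (h : Interleaves κ' T S) (hT : T ⊆ X.image g)
    (hκ : ∀ a ∈ X, ∀ b ∈ X, κ a < κ b ↔ κ' (g a) < κ' (g b)) :
    Interleaves κ (X.filter (g · ∈ T)) (X.filter (g · ∈ S)) := by
  intro a ha b hb hab
  rw [Finset.mem_filter] at ha hb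
  obtain ⟨_, hp, hap, hpb⟩ := h _ ha.2 _ hb.2 ((hκ a ha.1 b hb.1).1 hab)
  obtain ⟨p, hpX, rfl⟩ := Finset.mem_image.1 (hT hp)
  exact ⟨p, Finset.mem_filter.2 ⟨hpX, hp⟩, (hκ a ha.1 p hpX).2 hap, (hκ p hpX b hb.1).2 hpb⟩

/-- `c` lies to the left of every line through two points of the family `P` over `X`, directed by
increasing key `κ`. -/
def IsLeftOf (P : ι → ℝ × ℝ) (κ : ι → K) (X : Finset ι) (c : ℝ × ℝ) : Prop :=
  ∀ a ∈ X, ∀ b ∈ X, κ a < κ b → 0 < orient (P a) (P b) c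

/-- `c` lies to the right of every line through two points of the family `P` over `X`, directed by
increasing key `κ`. -/
def IsRightOf (P : ι → ℝ × ℝ) (κ : ι → K) (X : Finset ι) (c : ℝ × ℝ) : Prop :=
  ∀ a ∈ X, ∀ b ∈ X, κ a < κ b → orient (P a) (P b) c < 0

lemma IsRightOf.isLeftOf_toDual {X : Finset ι} {c : ℝ × ℝ} (h : IsRightOf P κ X c) :
    IsLeftOf P (OrderDual.toDual ∘ κ) X c := by
  intro a ha b hb hab
  rw [orient_swap, neg_pos]
  exact h b hb a ha hab

lemma IsLeftOf.isRightOf_toDual {X : Finset ι} {c : ℝ × ℝ} (h : IsLeftOf P κ X c) :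
    IsRightOf P (OrderDual.toDual ∘ κ) X c := by
  intro a ha b hb hab
  rw [orient_swap, neg_lt_zero]
  exact h b hb a ha hab

/-- The two halves in the recursive definition of a Horton set: `U` and `D` alternate in `X`, with
`U` high above `D` and `D` deep below `U`. Only orientations and the order of the keys enter, so
that the notion makes sense for points ordered along an arbitrary direction. -/
structure IsHortonSplit (P : ι → ℝ × ℝ) (κ : ι → K) (X U D : Finset ι) : Prop where
  mem_iff : ∀ i, i ∈ X ↔ i ∈ U ∨ i ∈ D
  disjoint : Disjoint U D
  interleaves_upper : Interleaves κ U D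
  interleaves_lower : Interleaves κ D U
  isLeftOf : ∀ p ∈ U, IsLeftOf P κ D (P p)
  isRightOf : ∀ p ∈ D, IsRightOf P κ U (P p)

namespace IsHortonSplit

variable {X U D : Finset ι}

lemma upper_subset (h : IsHortonSplit P κ X U D) : U ⊆ X := fun i hi ↦ (h.mem_iff i).2 (.inl hi)

lemma lower_subset (h : IsHortonSplit P κ X U D) : D ⊆ X := fun i hi ↦ (h.mem_iff i).2 (.inr hi)

lemma card_add_card (h : IsHortonSplit P κ X U D) : U.card + D.card = X.card := by
  rw [← Finset.card_union_of_disjoint h.disjoint]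
  congr 1
  ext i
  rw [Finset.mem_union, h.mem_iff]

lemma card_le_two_pow (h : IsHortonSplit P κ X U D) (hinj : Set.InjOn κ X) {L : ℕ}
    (hX : X.card ≤ 2 ^ (L + 1)) : U.card ≤ 2 ^ L ∧ D.card ≤ 2 ^ L := by
  have hU := h.interleaves_lower.card_le (hinj.mono (Finset.coe_subset.2 h.upper_subset))
  have hD := h.interleaves_upper.card_le (hinj.mono (Finset.coe_subset.2 h.lower_subset))
  have hadd := h.card_add_card
  rw [pow_succ] at hX
  omega

lemma toDual (h : IsHortonSplit P κ X U D) : IsHortonSplit P (OrderDual.toDual ∘ κ) X D U where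
  mem_iff i := (h.mem_iff i).trans or_comm
  disjoint := h.disjoint.symm
  interleaves_upper a ha b hb hab :=
    let ⟨p, hp, hbp, hpa⟩ := h.interleaves_lower b hb a ha hab
    ⟨p, hp, hpa, hbp⟩
  interleaves_lower a ha b hb hab :=
    let ⟨p, hp, hbp, hpa⟩ := h.interleaves_upper b hb a ha hab
    ⟨p, hp, hpa, hbp⟩
  isLeftOf p hp := (h.isRightOf p hp).isLeftOf_toDual
  isRightOf p hp := (h.isLeftOf p hp).isRightOf_toDual

lemma exists_left_between (h : IsHortonSplit P κ X U D) {a b p : ι} (ha : a ∈ X) (hb : b ∈ X)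
    (hab : ¬(a ∈ U ∧ b ∈ U)) (hp : p ∈ X) (hap : κ a < κ p) (hpb : κ p < κ b) :
    ∃ u ∈ U, κ u ∈ Set.Ioo (κ a) (κ b) ∧ 0 < orient (P a) (P b) (P u) := by
  rw [h.mem_iff] at ha hb hp
  obtain ⟨u, hu, hau, hub⟩ : ∃ u ∈ U, κ u ∈ Set.Ioo (κ a) (κ b) := by
    rcases hp with hp | hp
    · exact ⟨p, hp, hap, hpb⟩
    rcases ha with ha | ha
    · obtain ⟨u, hu, hpu, hub⟩ :=
        h.interleaves_upper p hp b (hb.resolve_left fun hb ↦ hab ⟨ha, hb⟩) hpb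
      exact ⟨u, hu, hap.trans hpu, hub⟩
    · obtain ⟨u, hu, hau, hup⟩ := h.interleaves_upper a ha p hp hap
      exact ⟨u, hu, hau, hup.trans hpb⟩
  refine ⟨u, hu, ⟨hau, hub⟩, ?_⟩
  rcases ha with ha | ha
  · have := h.isRightOf b (hb.resolve_left fun hb ↦ hab ⟨ha, hb⟩) a ha u hu hau
    rwa [← orient_rotate, orient_swap, neg_lt_zero, ← orient_rotate, ← orient_rotate] at this
  rcases hb with hb | hb
  · have := h.isRightOf a ha u hu b hb hub
    rwa [orient_swap, neg_lt_zero, ← orient_rotate, ← orient_rotate] at this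
  · exact h.isLeftOf u hu a ha b hb (hau.trans hub)

lemma comap {η K' : Type*} [LinearOrder K'] [DecidableEq η] {Q : η → ℝ × ℝ} {κ' : η → K'}
    {g : ι → η} {U D : Finset η} (h : IsHortonSplit Q κ' (X.image g) U D)
    (hP : ∀ a b c, orient (P a) (P b) (P c) = orient (Q (g a)) (Q (g b)) (Q (g c)))
    (hκ : ∀ a ∈ X, ∀ b ∈ X, κ a < κ b ↔ κ' (g a) < κ' (g b)) :
    IsHortonSplit P κ X (X.filter (g · ∈ U)) (X.filter (g · ∈ D)) where
  mem_iff i := by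
    simp only [Finset.mem_filter, ← and_or_left, ← h.mem_iff]
    exact ⟨fun hi ↦ ⟨hi, Finset.mem_image_of_mem g hi⟩, fun hi ↦ hi.1⟩
  disjoint := Finset.disjoint_filter.2 fun _ _ hU hD ↦ Finset.disjoint_left.1 h.disjoint hU hD
  interleaves_upper := h.interleaves_upper.comap h.upper_subset hκ
  interleaves_lower := h.interleaves_lower.comap h.lower_subset hκ
  isLeftOf p hp a ha b hb hab := by
    rw [Finset.mem_filter] at hp ha hb
    rw [hP]
    exact h.isLeftOf _ hp.2 _ ha.2 _ hb.2 ((hκ a ha.1 b hb.1).1 hab)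
  isRightOf p hp a ha b hb hab := by
    rw [Finset.mem_filter] at hp ha hb
    rw [hP]
    exact h.isRightOf _ hp.2 _ ha.2 _ hb.2 ((hκ a ha.1 b hb.1).1 hab)

end IsHortonSplit

/-- Horton sets as families: the points `P i`, for `i ∈ X`, form a Horton set when they are ordered
by the key `κ`, up to an orientation preserving change of the drawing. -/
inductive IsHortonFamily (P : ι → ℝ × ℝ) (κ : ι → K) : Finset ι → Prop
  | small {X : Finset ι} (hinj : Set.InjOn κ X) (hcard : X.card ≤ 2) : IsHortonFamily P κ X
  | split {X U D : Finset ι} (hinj : Set.InjOn κ X) (hsplit : IsHortonSplit P κ X U D)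
      (hU : IsHortonFamily P κ U) (hD : IsHortonFamily P κ D) : IsHortonFamily P κ X

namespace IsHortonFamily

variable {X : Finset ι}

lemma injOn (h : IsHortonFamily P κ X) : Set.InjOn κ X := by
  cases h <;> assumption

lemma toDual (h : IsHortonFamily P κ X) : IsHortonFamily P (OrderDual.toDual ∘ κ) X := by
  induction h with
  | small hinj hcard => exact .small (OrderDual.toDual.injective.comp_injOn hinj) hcard
  | split hinj hsplit _ _ ihU ihD =>
    exact .split (OrderDual.toDual.injective.comp_injOn hinj) hsplit.toDual ihD ihU

lemma comap {η K' : Type*} [LinearOrder K'] [DecidableEq η] {Q : η → ℝ × ℝ} {κ' : η → K'}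
    {g : ι → η} (h : IsHortonFamily Q κ' (X.image g))
    (hP : ∀ a b c, orient (P a) (P b) (P c) = orient (Q (g a)) (Q (g b)) (Q (g c)))
    (hg : Set.InjOn g X) (hκ : ∀ a ∈ X, ∀ b ∈ X, κ a < κ b ↔ κ' (g a) < κ' (g b)) :
    IsHortonFamily P κ X := by
  have hinjOn : Set.InjOn κ X := by
    intro a ha b hb hab
    have hle (x y : ι) (hx : x ∈ X) (hy : y ∈ X) (hxy : κ x = κ y) : κ' (g y) ≤ κ' (g x) :=
      not_lt.1 fun hlt ↦ ((hκ x hx y hy).2 hlt).ne hxy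
    exact hg ha hb <| h.injOn (by simpa using ⟨a, ha, rfl⟩) (by simpa using ⟨b, hb, rfl⟩)
      ((hle b a hb ha hab.symm).antisymm (hle a b ha hb hab))
  generalize hY : X.image g = Y at h
  induction h generalizing X with
  | small _ hcard => exact .small hinjOn (by rwa [← hY, Finset.card_image_of_injOn hg] at hcard)
  | @split _ U D _ hsplit _ _ ihU ihD =>
    subst hY
    have himage {T : Finset η} (hT : T ⊆ X.image g) : (X.filter (g · ∈ T)).image g = T := by
      ext y
      have := @hT y
      grind
    have hsub (T : Finset η) : X.filter (g · ∈ T) ⊆ X := Finset.filter_subset _ X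
    have hlt (T : Finset η) := fun a ha b hb ↦ hκ a (hsub T ha) b (hsub T hb)
    exact .split hinjOn (hsplit.comap hP hκ)
      (ihU (hg.mono (hsub U)) (hlt U) (hinjOn.mono (hsub U)) (himage hsplit.upper_subset))
      (ihD (hg.mono (hsub D)) (hlt D) (hinjOn.mono (hsub D)) (himage hsplit.lower_subset))

lemma congr_key {K' : Type*} [LinearOrder K'] {κ' : ι → K'} (h : IsHortonFamily P κ' X)
    (hκ : ∀ a ∈ X, ∀ b ∈ X, κ a < κ b ↔ κ' a < κ' b) : IsHortonFamily P κ X :=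
  comap (g := id) (by rwa [Finset.image_id]) (fun _ _ _ ↦ rfl) (Set.injOn_id _) hκ

lemma of_proportional_key {R : Type*} [CommRing R] [LinearOrder R] [IsStrictOrderedRing R]
    {κ κ' : ι → R} {s t : R} (h : IsHortonFamily P κ' X) (hs : 0 < s) (ht : t ≠ 0)
    (hκ : ∀ a ∈ X, ∀ b ∈ X, s * (κ b - κ a) = t * (κ' b - κ' a)) : IsHortonFamily P κ X := by
  rcases ht.lt_or_gt with ht | ht
  · refine h.toDual.congr_key fun a ha b hb ↦ ?_
    rw [← sub_pos, ← mul_pos_iff_of_pos_left hs, hκ a ha b hb, ← smul_eq_mul,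
      smul_pos_iff_of_neg_left ht, sub_neg]
    rfl
  · refine h.congr_key fun a ha b hb ↦ ?_
    rw [← sub_pos, ← mul_pos_iff_of_pos_left hs, hκ a ha b hb, mul_pos_iff_of_pos_left ht, sub_pos]

end IsHortonFamily

lemma exists_succ_of_lt {X : Finset ι} (hinj : Set.InjOn κ X) {a b : ι} (ha : a ∈ X) (hb : b ∈ X)
    (hab : κ a < κ b) : ∃ p ∈ X, κ a < κ p ∧ κ p ≤ κ b ∧
      (X.filter (κ · < κ p)).card = (X.filter (κ · < κ a)).card + 1 := by
  obtain ⟨p, hp, hmin⟩ := Finset.exists_min_image (X.filter (κ a < κ ·)) κ ⟨b, by simp [hb, hab]⟩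
  simp only [Finset.mem_filter] at hp hmin
  refine ⟨p, hp.1, hp.2, hmin b ⟨hb, hab⟩, ?_⟩
  have hinsert : X.filter (κ · < κ p) = insert a (X.filter (κ · < κ a)) := by
    ext q
    simp only [Finset.mem_filter, Finset.mem_insert]
    constructor
    · rintro ⟨hq, hqp⟩
      rcases lt_trichotomy (κ q) (κ a) with h | h | h
      · exact .inr ⟨hq, h⟩
      · exact .inl (hinj hq ha h)
      · exact absurd (hmin q ⟨hq, h⟩) hqp.not_ge
    · rintro (rfl | ⟨hq, hqa⟩)
      · exact ⟨ha, hp.2⟩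
      · exact ⟨hq, hqa.trans hp.2⟩
  rw [hinsert, Finset.card_insert_of_notMem (by simp)]

lemma exists_between_of_even_iff {X : Finset ι} (hinj : Set.InjOn κ X) {a b : ι} (ha : a ∈ X)
    (hb : b ∈ X) (hab : κ a < κ b)
    (heven : Even (X.filter (κ · < κ a)).card ↔ Even (X.filter (κ · < κ b)).card) :
    ∃ p ∈ X, κ p ∈ Set.Ioo (κ a) (κ b) ∧
      (Even (X.filter (κ · < κ p)).card ↔ ¬Even (X.filter (κ · < κ a)).card) := by
  obtain ⟨p, hp, hap, hpb, hcard⟩ := exists_succ_of_lt hinj ha hb hab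
  have hpar := hcard ▸ Nat.even_add_one
  refine ⟨p, hp, ⟨hap, hpb.lt_of_ne fun h ↦ ?_⟩, hpar⟩
  rw [h, heven] at hpar
  exact iff_not_self hpar

end HortonFamily

lemma DistinctX.injOn_fst {S : Set (ℝ × ℝ)} (h : DistinctX S) : Set.InjOn Prod.fst S :=
  fun a ha b hb hab ↦ by_contra fun hne ↦ h a ha b hb hne hab

lemma isHortonSplit_oddPart_evenPart {H : Finset (ℝ × ℝ)} (hx : DistinctX ↑H)
    (hhigh : HighAbove ↑(oddPart H) ↑(evenPart H)) (hdeep : DeepBelow ↑(evenPart H) ↑(oddPart H)) :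
    IsHortonSplit id Prod.fst H (oddPart H) (evenPart H) where
  mem_iff p := by
    simp only [oddPart, evenPart, Finset.mem_filter]
    tauto
  disjoint := (Finset.disjoint_filter_filter_not H H _).symm
  interleaves_upper a ha b hb hab := by
    simp only [evenPart, oddPart, Finset.mem_filter] at *
    obtain ⟨p, hp, hlt, hpar⟩ := exists_between_of_even_iff hx.injOn_fst ha.1 hb.1 hab
      (iff_of_true ha.2 hb.2)
    exact ⟨p, ⟨hp, fun h ↦ hpar.1 h ha.2⟩, hlt⟩
  interleaves_lower a ha b hb hab := by
    simp only [evenPart, oddPart, Finset.mem_filter] at *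
    obtain ⟨p, hp, hlt, hpar⟩ := exists_between_of_even_iff hx.injOn_fst ha.1 hb.1 hab
      (iff_of_false ha.2 hb.2)
    exact ⟨p, ⟨hp, hpar.2 ha.2⟩, hlt⟩
  isLeftOf p hp a ha b hb hab := sub_pos.2 (hdeep a ha b hb hab p hp)
  isRightOf p hp a ha b hb hab := sub_neg.2 (hhigh a ha b hb hab p hp)

lemma IsHorton.isHortonFamily {H : Finset (ℝ × ℝ)} (h : IsHorton H) :
    IsHortonFamily id Prod.fst H := by
  induction h with
  | small H _ hx hcard => exact .small hx.injOn_fst hcard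
  | split H _ hx _ _ _ hhigh hdeep ih0 ih1 =>
    exact .split hx.injOn_fst (isHortonSplit_oddPart_evenPart hx hhigh hdeep) ih1 ih0

section StabbedFan

variable {ι K : Type*} [LinearOrder K] {P : ι → ℝ × ℝ} {κ : ι → K} {X : Finset ι}

/-- The edges between members of `X`, taken in increasing order of key, that have no point of the
family to their left among the points between their endpoints. -/
def visibleEdges (P : ι → ℝ × ℝ) (κ : ι → K) (X : Finset ι) : Finset (ι × ι) :=
  (X ×ˢ X).filter fun e ↦ κ e.1 < κ e.2 ∧
    ∀ p ∈ X, κ p ∈ Set.Ioo (κ e.1) (κ e.2) → orient (P e.1) (P e.2) (P p) ≤ 0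

lemma mem_visibleEdges {e : ι × ι} : e ∈ visibleEdges P κ X ↔ (e.1 ∈ X ∧ e.2 ∈ X) ∧ κ e.1 < κ e.2 ∧
    ∀ p ∈ X, κ p ∈ Set.Ioo (κ e.1) (κ e.2) → orient (P e.1) (P e.2) (P p) ≤ 0 := by
  rw [visibleEdges, Finset.mem_filter, Finset.mem_product]

/-- Any two of the edges in `E`, viewed as intervals of keys, overlap. -/
def PairwiseOverlapping (κ : ι → K) (E : Finset (ι × ι)) : Prop :=
  ∀ e ∈ E, ∀ e' ∈ E, κ e.1 < κ e'.2

lemma PairwiseOverlapping.mono {E F : Finset (ι × ι)} (h : PairwiseOverlapping κ F) (hEF : E ⊆ F) :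
    PairwiseOverlapping κ E :=
  fun e he e' he' ↦ h e (hEF he) e' (hEF he')

lemma PairwiseOverlapping.card_le_one {E : Finset (ι × ι)} (hE : PairwiseOverlapping κ E)
    (hinj : Set.InjOn κ X) (hEX : E ⊆ X ×ˢ X)
    (hcons : ∀ e ∈ E, ∀ p ∈ X, κ p ∉ Set.Ioo (κ e.1) (κ e.2)) : E.card ≤ 1 := by
  have hle (e : ι × ι) (he : e ∈ E) (e' : ι × ι) (he' : e' ∈ E) :
      κ e.1 ≤ κ e'.1 ∧ κ e.2 ≤ κ e'.2 := by
    have heX := Finset.mem_product.1 (hEX he)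
    have heX' := Finset.mem_product.1 (hEX he')
    exact ⟨not_lt.1 fun h ↦ hcons e' he' e.1 heX.1 ⟨h, hE e he e' he'⟩,
      not_lt.1 fun h ↦ hcons e he e'.2 heX'.2 ⟨hE e he e' he', h⟩⟩
  refine Finset.card_le_one.2 fun e he e' he' ↦ ?_
  have heX := Finset.mem_product.1 (hEX he)
  have heX' := Finset.mem_product.1 (hEX he')
  obtain ⟨h1, h2⟩ := hle e he e' he'
  obtain ⟨h1', h2'⟩ := hle e' he' e he
  exact Prod.ext (hinj heX.1 heX'.1 (h1.antisymm h1')) (hinj heX.2 heX'.2 (h2.antisymm h2'))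

lemma notMem_Ioo_of_mem_visibleEdges_of_card_le_two (hX : X.card ≤ 2) {e : ι × ι}
    (he : e ∈ visibleEdges P κ X) {p : ι} (hp : p ∈ X) : κ p ∉ Set.Ioo (κ e.1) (κ e.2) := by
  rintro ⟨h1, h2⟩
  rw [mem_visibleEdges] at he
  refine hX.not_gt (Finset.two_lt_card.2 ⟨e.1, he.1.1, p, hp, e.2, he.1.2, ?_, ?_, ?_⟩)
  exacts [ne_of_apply_ne κ h1.ne, ne_of_apply_ne κ he.2.1.ne, ne_of_apply_ne κ h2.ne]

lemma IsHortonSplit.notMem_Ioo_of_mem_visibleEdges {U D : Finset ι}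
    (h : IsHortonSplit P κ X U D) {e : ι × ι} (he : e ∈ visibleEdges P κ X)
    (hU : ¬(e.1 ∈ U ∧ e.2 ∈ U)) {p : ι} (hp : p ∈ X) : κ p ∉ Set.Ioo (κ e.1) (κ e.2) := by
  rintro ⟨h1, h2⟩
  rw [mem_visibleEdges] at he
  obtain ⟨u, hu, hlt, hpos⟩ := h.exists_left_between he.1.1 he.1.2 hU hp h1 h2
  exact hpos.not_ge (he.2.2 u (h.upper_subset hu) hlt)

lemma mem_visibleEdges_of_subset {U : Finset ι} (hUX : U ⊆ X) {e : ι × ι}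
    (he : e ∈ visibleEdges P κ X) (h1 : e.1 ∈ U) (h2 : e.2 ∈ U) : e ∈ visibleEdges P κ U := by
  rw [mem_visibleEdges] at he ⊢
  exact ⟨⟨h1, h2⟩, he.2.1, fun p hp ↦ he.2.2 p (hUX hp)⟩

lemma one_lt_card_of_mem_visibleEdges {e : ι × ι} (he : e ∈ visibleEdges P κ X) : 1 < X.card := by
  rw [mem_visibleEdges] at he
  exact Finset.one_lt_card.2 ⟨e.1, he.1.1, e.2, he.1.2, ne_of_apply_ne κ he.2.1.ne⟩

/- At each level of the recursion at most one of the pairwise overlapping edges has an endpoint in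
the lower half. -/
lemma IsHortonFamily.card_le_of_subset_visibleEdges (h : IsHortonFamily P κ X) {L : ℕ}
    (hL : X.card ≤ 2 ^ L) {E : Finset (ι × ι)} (hE : E ⊆ visibleEdges P κ X)
    (hover : PairwiseOverlapping κ E) : E.card ≤ L := by
  induction h generalizing L E with
  | small hinj hcard =>
    rcases E.eq_empty_or_nonempty with rfl | ⟨e, he⟩
    · exact zero_le
    have hL0 : L ≠ 0 := by
      rintro rfl
      exact (one_lt_card_of_mem_visibleEdges (hE he)).not_ge hL
    refine (hover.card_le_one hinj (hE.trans (Finset.filter_subset _ _)) fun e he p hp ↦ ?_).trans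
      (Nat.one_le_iff_ne_zero.2 hL0)
    exact notMem_Ioo_of_mem_visibleEdges_of_card_le_two hcard (hE he) hp
  | @split X U D hinj hsplit _ _ ihU _ =>
    rcases E.eq_empty_or_nonempty with rfl | ⟨e, he⟩
    · exact zero_le
    obtain _ | L := L
    · exact absurd hL (one_lt_card_of_mem_visibleEdges (hE he)).not_ge
    rw [← Finset.card_filter_add_card_filter_not (p := fun e ↦ e.1 ∈ U ∧ e.2 ∈ U)]
    refine add_le_add (ihU (hsplit.card_le_two_pow hinj hL).1 (fun e he ↦ ?_)
      (hover.mono (Finset.filter_subset _ _)))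
      ((hover.mono (Finset.filter_subset _ _)).card_le_one hinj
        ((Finset.filter_subset _ _).trans (hE.trans (Finset.filter_subset _ _))) fun e he p hp ↦ ?_)
    all_goals rw [Finset.mem_filter] at he
    · exact mem_visibleEdges_of_subset hsplit.upper_subset (hE he.1) he.2.1 he.2.2
    · exact hsplit.notMem_Ioo_of_mem_visibleEdges (hE he.1) he.2 hp

lemma IsLeftOf.lt_of_orient_pos {c : ℝ × ℝ} (hc : IsLeftOf P κ X c) (hinj : Set.InjOn κ X)
    {a b : ι} (ha : a ∈ X) (hb : b ∈ X) (hab : 0 < orient (P a) (P b) c) : κ a < κ b := by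
  refine lt_of_not_ge fun hba ↦ ?_
  rcases hba.lt_or_eq with hlt | heq
  · have := hc b hb a ha hlt
    rw [orient_swap] at this
    linarith
  · rw [hinj hb ha heq, orient_self_left] at hab
    exact hab.false

/-- The edges spanned by `X` which, together with the apex `c`, form a positively oriented triangle
containing `q` and no point of the family. -/
def stabbedFan (P : ι → ℝ × ℝ) (X : Finset ι) (c q : ℝ × ℝ) : Finset (ι × ι) :=
  (X ×ˢ X).filter fun e ↦ InTriangle (P e.1) (P e.2) c q ∧
    ∀ p ∈ X, ¬InTriangle (P e.1) (P e.2) c (P p)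

lemma mem_stabbedFan {c q : ℝ × ℝ} {e : ι × ι} : e ∈ stabbedFan P X c q ↔ (e.1 ∈ X ∧ e.2 ∈ X) ∧
    InTriangle (P e.1) (P e.2) c q ∧ ∀ p ∈ X, ¬InTriangle (P e.1) (P e.2) c (P p) := by
  rw [stabbedFan, Finset.mem_filter, Finset.mem_product]

lemma IsLeftOf.stabbedFan_subset_visibleEdges {c : ℝ × ℝ} (hc : IsLeftOf P κ X c)
    (hinj : Set.InjOn κ X) (q : ℝ × ℝ) : stabbedFan P X c q ⊆ visibleEdges P κ X := by
  intro e he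
  rw [mem_stabbedFan] at he
  obtain ⟨⟨ha, hb⟩, hq, hempty⟩ := he
  refine mem_visibleEdges.2 ⟨⟨ha, hb⟩, hc.lt_of_orient_pos hinj ha hb hq.orient_pos,
    fun p hp hlt ↦ not_lt.1 fun hpos ↦ hempty p hp ⟨hpos, ?_, ?_⟩⟩
  · simpa only [← orient_rotate (P p)] using hc p hp e.2 hb hlt.2
  · simpa only [orient_rotate] using hc e.1 ha p hp hlt.1

/- If two edges did not overlap, then seen from `c` they would lie in disjoint angular sectors, so
that the two triangles could not share the point `q`. -/
lemma IsLeftOf.pairwiseOverlapping_stabbedFan {c : ℝ × ℝ} (hc : IsLeftOf P κ X c)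
    (hinj : Set.InjOn κ X) (q : ℝ × ℝ) : PairwiseOverlapping κ (stabbedFan P X c q) := by
  rintro ⟨a, b⟩ he ⟨a', b'⟩ he'
  simp only [mem_stabbedFan] at he he'
  obtain ⟨⟨ha, -⟩, hq, -⟩ := he
  obtain ⟨⟨ha', hb'⟩, hq', -⟩ := he'
  have hlt' := hc.lt_of_orient_pos hinj ha' hb' hq'.orient_pos
  refine lt_of_not_ge fun (hle : κ b' ≤ κ a) ↦ ?_
  have hba : 0 ≤ orient c (P b') (P a) := by
    rw [← orient_rotate]
    rcases hle.lt_or_eq with hlt | heq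
    · exact (hc b' hb' a ha hlt).le
    · rw [hinj hb' ha heq, orient_self_left]
  have haa : 0 < orient c (P a') (P a) := by
    rw [← orient_rotate]
    exact hc a' ha' a ha (hlt'.trans_le hle)
  have hab : 0 < orient c (P a') (P b') := by
    rw [← orient_rotate]
    exact hq'.orient_pos
  have hbq : orient c (P b') q < 0 := by
    rw [orient_swap, neg_lt_zero]
    exact hq'.2.1
  have hplucker := orient_plucker c (P a') (P b') (P a) q
  linarith [mul_pos hab hq.2.2, mul_neg_of_pos_of_neg haa hbq, mul_nonneg hq'.2.2.le hba]

lemma IsHortonFamily.card_stabbedFan_le_of_isLeftOf (h : IsHortonFamily P κ X) {L : ℕ}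
    (hL : X.card ≤ 2 ^ L) {c : ℝ × ℝ} (hc : IsLeftOf P κ X c) (q : ℝ × ℝ) :
    (stabbedFan P X c q).card ≤ L :=
  h.card_le_of_subset_visibleEdges hL (hc.stabbedFan_subset_visibleEdges h.injOn q)
    (hc.pairwiseOverlapping_stabbedFan h.injOn q)

lemma IsHortonFamily.card_stabbedFan_le_of_isRightOf (h : IsHortonFamily P κ X) {L : ℕ}
    (hL : X.card ≤ 2 ^ L) {c : ℝ × ℝ} (hc : IsRightOf P κ X c) (q : ℝ × ℝ) :
    (stabbedFan P X c q).card ≤ L :=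
  h.toDual.card_stabbedFan_le_of_isLeftOf hL hc.isLeftOf_toDual q

end StabbedFan

/-- The cyclic rotation `(a, b, c) ↦ (b, c, a)` of triples. -/
def rotateTriple (ι : Type*) : Equiv.Perm (ι × ι × ι) where
  toFun t := (t.2.1, t.2.2, t.1)
  invFun t := (t.2.2, t.1, t.2.1)
  left_inv _ := rfl
  right_inv _ := rfl

lemma card_le_three_mul_of_perm {α : Type*} (σ : Equiv.Perm α) {S M : Finset α}
    (h : ∀ t ∈ S, t ∈ M ∨ σ t ∈ M ∨ σ (σ t) ∈ M) : S.card ≤ 3 * M.card := by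
  have hsub : S ⊆ M ∪ M.map σ.symm.toEmbedding ∪ M.map (σ.trans σ).symm.toEmbedding := by
    intro t ht
    simpa only [Finset.mem_union, Finset.mem_map_equiv, Equiv.symm_symm, Equiv.trans_apply,
      or_assoc] using h t ht
  have := (Finset.card_le_card hsub).trans (Finset.card_union_le _ _)
  have := Finset.card_union_le M (M.map σ.symm.toEmbedding)
  simp only [Finset.card_map] at *
  omega

section StabbedTriples

variable {ι K : Type*} [LinearOrder K] {P : ι → ℝ × ℝ} {κ : ι → K} {X : Finset ι}

/-- The positively oriented triples of `X` whose triangle contains `q` and no point of the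
family; every triangle is listed once for each of its three cyclic orderings. -/
def stabbedTriples (P : ι → ℝ × ℝ) (X : Finset ι) (q : ℝ × ℝ) : Finset (ι × ι × ι) :=
  (X ×ˢ X ×ˢ X).filter fun t ↦ InTriangle (P t.1) (P t.2.1) (P t.2.2) q ∧
    ∀ p ∈ X, ¬InTriangle (P t.1) (P t.2.1) (P t.2.2) (P p)

lemma mem_stabbedTriples {q : ℝ × ℝ} {a b c : ι} : (a, b, c) ∈ stabbedTriples P X q ↔
    (a ∈ X ∧ b ∈ X ∧ c ∈ X) ∧ InTriangle (P a) (P b) (P c) q ∧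
      ∀ p ∈ X, ¬InTriangle (P a) (P b) (P c) (P p) := by
  simp only [stabbedTriples, Finset.mem_filter, Finset.mem_product]

lemma rotateTriple_mem_stabbedTriples {q : ℝ × ℝ} {t : ι × ι × ι}
    (ht : t ∈ stabbedTriples P X q) : rotateTriple ι t ∈ stabbedTriples P X q := by
  obtain ⟨a, b, c⟩ := t
  rw [mem_stabbedTriples] at ht
  obtain ⟨⟨ha, hb, hc⟩, hq, hempty⟩ := ht
  exact mem_stabbedTriples.2
    ⟨⟨hb, hc, ha⟩, hq.rotate, fun p hp h ↦ hempty p hp h.rotate.rotate⟩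

lemma mem_stabbedTriples_of_mem_interior {q : ℝ × ℝ} {a b c : ι} (ha : a ∈ X) (hb : b ∈ X)
    (hc : c ∈ X) (hpos : 0 < orient (P a) (P b) (P c))
    (hempty : ∀ p ∈ X, P p ∉ interior (convexHull ℝ {P a, P b, P c}))
    (hq : q ∈ interior (convexHull ℝ {P a, P b, P c})) : (a, b, c) ∈ stabbedTriples P X q := by
  simp only [mem_interior_convexHull_triple_iff hpos] at hempty hq
  exact mem_stabbedTriples.2 ⟨⟨ha, hb, hc⟩, hq, hempty⟩

lemma stabbedCount_image_le (P : ι → ℝ × ℝ) (X : Finset ι) (q : ℝ × ℝ) :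
    stabbedCount ↑(X.image P) q ≤ (stabbedTriples P X q).card := by
  let vertices (t : ι × ι × ι) : Finset (ℝ × ℝ) := {P t.1, P t.2.1, P t.2.2}
  suffices hsub : {t : Finset (ℝ × ℝ) | IsEmptyTriangleOf ↑(X.image P) t ∧
      q ∈ interior (convexHull ℝ (t : Set (ℝ × ℝ)))} ⊆ (stabbedTriples P X q).image vertices from
    (Set.ncard_le_ncard hsub).trans <|
      (Set.ncard_coe_finset _).trans_le Finset.card_image_le
  rintro t ⟨⟨hcard, ht, hcol, hempty⟩, hq⟩
  obtain ⟨x, y, z, -, -, -, rfl⟩ := Finset.card_eq_three.1 hcard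
  rw [Finset.coe_subset] at ht
  simp only [Finset.insert_subset_iff, Finset.singleton_subset_iff, Finset.mem_image] at ht
  obtain ⟨⟨a, ha, rfl⟩, ⟨b, hb, rfl⟩, ⟨c, hc, rfl⟩⟩ := ht
  simp only [Finset.coe_insert, Finset.coe_singleton, Finset.coe_image,
    Set.forall_mem_image, Finset.mem_coe] at hcol hempty hq
  rw [collinear_triple_iff_orient_eq_zero] at hcol
  rw [Finset.mem_coe, Finset.mem_image]
  rcases lt_or_gt_of_ne hcol with hneg | hpos
  · rw [Set.insert_comm] at hempty hq
    refine ⟨(b, a, c), mem_stabbedTriples_of_mem_interior hb ha hc ?_ hempty hq,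
      Finset.insert_comm _ _ _⟩
    rwa [orient_swap, neg_pos]
  · exact ⟨(a, b, c), mem_stabbedTriples_of_mem_interior ha hb hc hpos hempty hq, rfl⟩

lemma mem_stabbedTriples_of_subset {U : Finset ι} (hU : U ⊆ X) {q : ℝ × ℝ} {a b c : ι}
    (h : (a, b, c) ∈ stabbedTriples P X q) (ha : a ∈ U) (hb : b ∈ U) (hc : c ∈ U) :
    (a, b, c) ∈ stabbedTriples P U q := by
  rw [mem_stabbedTriples] at h ⊢
  exact ⟨⟨ha, hb, hc⟩, h.2.1, fun p hp ↦ h.2.2 p (hU hp)⟩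

lemma two_lt_card_of_mem_stabbedTriples {q : ℝ × ℝ} {t : ι × ι × ι}
    (h : t ∈ stabbedTriples P X q) : 2 < X.card := by
  obtain ⟨a, b, c⟩ := t
  obtain ⟨⟨ha, hb, hc⟩, hq, -⟩ := mem_stabbedTriples.1 h
  refine Finset.two_lt_card.2 ⟨a, ha, b, hb, c, hc, ?_, ?_, ?_⟩ <;> rintro rfl
  · exact hq.orient_pos.ne' (orient_self_left _ _)
  · exact hq.orient_pos.ne' (orient_self_outer _ _)
  · exact hq.orient_pos.ne' (orient_self_right _ _)

/-- The triples `(a, b, c)` with `c ∈ C` for which `(a, b)` belongs to the stabbed fan of `X` with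
apex `P c`. -/
def mixedTriples (P : ι → ℝ × ℝ) (X C : Finset ι) (q : ℝ × ℝ) : Finset (ι × ι × ι) :=
  C.biUnion fun c ↦ (stabbedFan P X (P c) q).image fun e ↦ (e.1, e.2, c)

lemma card_mixedTriples_le {C : Finset ι} {q : ℝ × ℝ} {L : ℕ}
    (h : ∀ c ∈ C, (stabbedFan P X (P c) q).card ≤ L) :
    (mixedTriples P X C q).card ≤ C.card * L :=
  Finset.card_biUnion_le_card_mul _ _ _ fun c hc ↦ Finset.card_image_le.trans (h c hc)

lemma mem_mixedTriples_of_subset {Y C : Finset ι} (hY : Y ⊆ X) {q : ℝ × ℝ} {a b c : ι}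
    (h : (a, b, c) ∈ stabbedTriples P X q) (ha : a ∈ Y) (hb : b ∈ Y) (hc : c ∈ C) :
    (a, b, c) ∈ mixedTriples P Y C q := by
  rw [mem_stabbedTriples] at h
  exact Finset.mem_biUnion.2 ⟨c, hc, Finset.mem_image.2 ⟨(a, b),
    mem_stabbedFan.2 ⟨⟨ha, hb⟩, h.2.1, fun p hp ↦ h.2.2 p (hY hp)⟩, rfl⟩⟩

/- A triangle with vertices in both halves has, up to rotation, exactly one vertex outside the half
containing its first edge. -/
lemma IsHortonSplit.exists_rotate_mem_mixedTriples {U D : Finset ι} (h : IsHortonSplit P κ X U D)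
    {q : ℝ × ℝ} {t : ι × ι × ι} (ht : t ∈ stabbedTriples P X q) (hU : t ∉ stabbedTriples P U q)
    (hD : t ∉ stabbedTriples P D q) :
    t ∈ mixedTriples P U D q ∪ mixedTriples P D U q ∨
      rotateTriple ι t ∈ mixedTriples P U D q ∪ mixedTriples P D U q ∨
      rotateTriple ι (rotateTriple ι t) ∈ mixedTriples P U D q ∪ mixedTriples P D U q := by
  have ht' := rotateTriple_mem_stabbedTriples ht
  have ht'' := rotateTriple_mem_stabbedTriples ht'
  have hUUD {a b c : ι} (habc : (a, b, c) ∈ stabbedTriples P X q) (ha : a ∈ U) (hb : b ∈ U)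
      (hc : c ∈ D) : (a, b, c) ∈ mixedTriples P U D q ∪ mixedTriples P D U q :=
    Finset.mem_union_left _ (mem_mixedTriples_of_subset h.upper_subset habc ha hb hc)
  have hDDU {a b c : ι} (habc : (a, b, c) ∈ stabbedTriples P X q) (ha : a ∈ D) (hb : b ∈ D)
      (hc : c ∈ U) : (a, b, c) ∈ mixedTriples P U D q ∪ mixedTriples P D U q :=
    Finset.mem_union_right _ (mem_mixedTriples_of_subset h.lower_subset habc ha hb hc)
  obtain ⟨a, b, c⟩ := t
  obtain ⟨ha, hb, hc⟩ := (mem_stabbedTriples.1 ht).1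
  rw [h.mem_iff] at ha hb hc
  rcases ha with ha | ha <;> rcases hb with hb | hb <;> rcases hc with hc | hc
  · exact absurd (mem_stabbedTriples_of_subset h.upper_subset ht ha hb hc) hU
  · exact .inl (hUUD ht ha hb hc)
  · exact .inr (.inr (hUUD ht'' hc ha hb))
  · exact .inr (.inl (hDDU ht' hb hc ha))
  · exact .inr (.inl (hUUD ht' hb hc ha))
  · exact .inr (.inr (hDDU ht'' hc ha hb))
  · exact .inl (hDDU ht ha hb hc)
  · exact absurd (mem_stabbedTriples_of_subset h.lower_subset ht ha hb hc) hD

lemma IsHortonSplit.card_stabbedTriples_le {U D : Finset ι} (h : IsHortonSplit P κ X U D)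
    (q : ℝ × ℝ) :
    (stabbedTriples P X q).card ≤ (stabbedTriples P U q).card + (stabbedTriples P D q).card +
      3 * ((mixedTriples P U D q).card + (mixedTriples P D U q).card) := by
  have hmixed : ((stabbedTriples P X q \ stabbedTriples P U q) \ stabbedTriples P D q).card ≤
      3 * (mixedTriples P U D q ∪ mixedTriples P D U q).card := by
    refine card_le_three_mul_of_perm (rotateTriple ι) fun t ht ↦ ?_
    simp only [Finset.mem_sdiff] at ht
    exact h.exists_rotate_mem_mixedTriples ht.1.1 ht.1.2 ht.2
  have hU := Finset.card_le_card_sdiff_add_card (s := stabbedTriples P X q)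
    (t := stabbedTriples P U q)
  have hD := Finset.card_le_card_sdiff_add_card
    (s := stabbedTriples P X q \ stabbedTriples P U q) (t := stabbedTriples P D q)
  have := Finset.card_union_le (mixedTriples P U D q) (mixedTriples P D U q)
  omega

lemma IsHortonFamily.card_stabbedTriples_le (h : IsHortonFamily P κ X) {L : ℕ}
    (hL : X.card ≤ 2 ^ L) (q : ℝ × ℝ) : (stabbedTriples P X q).card ≤ 3 * X.card * L ^ 2 := by
  induction h generalizing L with
  | @small X _ hcard =>
    suffices stabbedTriples P X q = ∅ by simp [this]
    exact Finset.eq_empty_of_forall_notMem fun t ht ↦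
      hcard.not_gt (two_lt_card_of_mem_stabbedTriples ht)
  | @split X U D hinj hsplit hU hD ihU ihD =>
    rcases (stabbedTriples P X q).eq_empty_or_nonempty with h0 | ⟨t, ht⟩
    · simp [h0]
    obtain _ | L := L
    · have := two_lt_card_of_mem_stabbedTriples ht
      omega
    obtain ⟨hUL, hDL⟩ := hsplit.card_le_two_pow hinj hL
    have hUD : (mixedTriples P U D q).card ≤ D.card * L := card_mixedTriples_le fun c hc ↦
      hU.card_stabbedFan_le_of_isRightOf hUL (hsplit.isRightOf c hc) q
    have hDU : (mixedTriples P D U q).card ≤ U.card * L := card_mixedTriples_le fun c hc ↦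
      hD.card_stabbedFan_le_of_isLeftOf hDL (hsplit.isLeftOf c hc) q
    calc (stabbedTriples P X q).card
        ≤ (stabbedTriples P U q).card + (stabbedTriples P D q).card +
            3 * ((mixedTriples P U D q).card + (mixedTriples P D U q).card) :=
          hsplit.card_stabbedTriples_le q
      _ ≤ 3 * U.card * L ^ 2 + 3 * D.card * L ^ 2 + 3 * (D.card * L + U.card * L) := by
          gcongr
          exacts [ihU hUL, ihD hDL]
      _ = 3 * X.card * (L ^ 2 + L) := by
          rw [← hsplit.card_add_card]
          ring
      _ ≤ 3 * X.card * (L + 1) ^ 2 := by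
          gcongr
          linarith

end StabbedTriples

section Lattice

/-- The cross product of two integer vectors, twice the signed area they span. -/
def cross (v w : ℤ × ℤ) : ℤ := v.1 * w.2 - v.2 * w.1

/-- The scalar product of two integer vectors. -/
def dot (v w : ℤ × ℤ) : ℤ := v.1 * w.1 + v.2 * w.2

/-- The number of lattice steps along the integer vector `u`. -/
def latticeLength (u : ℤ × ℤ) : ℕ := Int.gcd u.1 u.2

lemma cross_sub (v a b : ℤ × ℤ) : cross v (a - b) = cross v a - cross v b := by
  simp only [cross, Prod.fst_sub, Prod.snd_sub]
  ring

lemma cross_swap (a b c : ℤ × ℤ) : cross (a - b) (c - b) = -cross (b - a) (c - a) := by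
  simp only [cross, Prod.fst_sub, Prod.snd_sub]
  ring

lemma dot_sub (v a b : ℤ × ℤ) : dot v (a - b) = dot v a - dot v b := by
  simp only [dot, Prod.fst_sub, Prod.snd_sub]
  ring

lemma dot_self_pos {v : ℤ × ℤ} (hv : v ≠ 0) : 0 < dot v v := by
  unfold dot
  contrapose! hv
  exact Prod.ext (by simp; nlinarith) (by simp; nlinarith)

lemma eq_zero_of_dot_eq_zero_of_cross_eq_zero {v u : ℤ × ℤ} (hv : v ≠ 0) (hdot : dot v u = 0)
    (hcross : cross v u = 0) : u = 0 := by
  have hsq : dot v v * dot u u = dot v u ^ 2 + cross v u ^ 2 := by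
    unfold dot cross
    ring
  rw [hdot, hcross] at hsq
  contrapose! hsq
  exact (mul_pos (dot_self_pos hv) (dot_self_pos hsq)).ne'

lemma fst_mul_dot_of_cross_eq_zero {v u : ℤ × ℤ} (h : cross v u = 0) :
    v.1 * dot v u = dot v v * u.1 := by
  unfold cross at h
  unfold dot
  linear_combination v.2 * h

lemma snd_mul_dot_of_cross_eq_zero {v u : ℤ × ℤ} (h : cross v u = 0) :
    v.2 * dot v u = dot v v * u.2 := by
  unfold cross at h
  unfold dot
  linear_combination -v.1 * h

lemma dot_self_mul_cross (v x y : ℤ × ℤ) :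
    dot v v * cross x y = dot v x * cross v y - cross v x * dot v y := by
  unfold dot cross
  ring

lemma latticeLength_pos {u : ℤ × ℤ} (hu : u ≠ 0) : 0 < latticeLength u := by
  rw [latticeLength, Int.gcd_pos_iff]
  contrapose! hu
  exact Prod.ext hu.1 hu.2

lemma exists_eq_latticeLength_smul {u : ℤ × ℤ} (hu : u ≠ 0) :
    ∃ v : ℤ × ℤ, IsCoprime v.1 v.2 ∧ u = (latticeLength u : ℤ) • v := by
  obtain ⟨x, y, hxy, hx, hy⟩ := Int.exists_gcd_one (latticeLength_pos hu)
  refine ⟨(x, y), Int.isCoprime_iff_gcd_eq_one.2 hxy, Prod.ext ?_ ?_⟩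
  · simpa [latticeLength, mul_comm] using hx
  · simpa [latticeLength, mul_comm] using hy

lemma exists_cross_eq_one {v : ℤ × ℤ} (hv : IsCoprime v.1 v.2) :
    ∃ w : ℤ × ℤ, cross v w = 1 := by
  obtain ⟨x, y, hxy⟩ := hv
  exact ⟨(-y, x), by unfold cross; linear_combination hxy⟩

lemma exists_eq_smul_add_smul {v w : ℤ × ℤ} (hvw : cross v w = 1) (u : ℤ × ℤ) :
    ∃ s h : ℤ, u = s • v + h • w := by
  unfold cross at hvw
  refine ⟨cross u w, cross v u, ?_⟩
  ext <;> simp only [cross, Prod.fst_add, Prod.snd_add, Prod.smul_fst, Prod.smul_snd, smul_eq_mul]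
  · linear_combination (-u.1) * hvw
  · linear_combination (-u.2) * hvw

lemma cross_smul_add_smul {v w : ℤ × ℤ} (hvw : cross v w = 1) (x y x' y' : ℤ) :
    cross (x • v + y • w) (x' • v + y' • w) = x * y' - y * x' := by
  simp only [cross, Prod.fst_add, Prod.snd_add, Prod.smul_fst, Prod.smul_snd, smul_eq_mul] at *
  linear_combination (x * y' - y * x') * hvw

lemma isCoprime_of_latticeLength_smul_add_smul_le_one {v w : ℤ × ℤ} {s h : ℤ}
    (hvw : cross v w = 1) (hh : h ≠ 0) (hlen : latticeLength (s • v + h • w) ≤ 1) :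
    IsCoprime s h := by
  have hu : s • v + h • w ≠ 0 := fun h0 ↦ hh <| by
    have hcross := cross_smul_add_smul hvw 1 0 s h
    rw [h0] at hcross
    simpa [cross] using hcross.symm
  obtain ⟨x, y, hxy⟩ := Int.isCoprime_iff_gcd_eq_one.2 (hlen.antisymm (latticeLength_pos hu))
  simp only [Prod.fst_add, Prod.snd_add, Prod.smul_fst, Prod.smul_snd, smul_eq_mul] at hxy
  exact ⟨x * v.1 + y * v.2, x * w.1 + y * w.2, by linear_combination hxy⟩

/- The point is sought on the lattice line next to the side from `(0, 0)` to `(s, h)`. -/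
lemma exists_interior_lattice_point_of_unit_base {s h : ℤ} (hh : 3 ≤ h) (hs : IsCoprime s h)
    (hs' : IsCoprime (s - 1) h) : ∃ x y : ℤ, 0 < y ∧ s * y < h * x ∧ h * x + y < h + s * y := by
  obtain ⟨t, k, htk⟩ := hs
  have hmod : h * (-t / h) + -t % h = -t := Int.mul_ediv_add_emod _ _
  have hlt : -t % h < h := Int.emod_lt_of_pos _ (by lia)
  have hnonneg : 0 ≤ -t % h := Int.emod_nonneg _ (by lia)
  have hline : h * (k - s * (-t / h)) - s * (-t % h) = 1 := by
    linear_combination htk - s * hmod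
  have hy0 : -t % h ≠ 0 := fun h0 ↦ by
    rw [h0, mul_zero, sub_zero] at hline
    have := Int.le_of_dvd one_pos ⟨_, hline.symm⟩
    lia
  have hyh : -t % h ≠ h - 1 := fun h1 ↦ by
    rw [h1] at hline
    have hdvd : h ∣ s - 1 := ⟨s - (k - s * (-t / h)), by linear_combination hline⟩
    have := Int.isUnit_iff.1 (hs'.isUnit_of_dvd' hdvd dvd_rfl)
    lia
  exact ⟨k - s * (-t / h), -t % h, by lia, by linarith, by lia⟩

lemma exists_interior_lattice_point_normalized {d s h : ℤ} (hd : 0 < d) (hh : 3 ≤ h)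
    (hs : d = 1 → IsCoprime s h) (hs' : d = 1 → IsCoprime (s - d) h) :
    ∃ x y : ℤ, 0 < y ∧ s * y < h * x ∧ h * x + d * y < h * d + s * y := by
  obtain rfl | hd : d = 1 ∨ 2 ≤ d := by lia
  · simpa using exists_interior_lattice_point_of_unit_base hh (hs rfl) (hs' rfl)
  · have hmod : h * (s / h) + s % h = s := Int.mul_ediv_add_emod _ _
    have hlt : s % h < h := Int.emod_lt_of_pos _ (by lia)
    have hnonneg : 0 ≤ s % h := Int.emod_nonneg _ (by lia)
    exact ⟨s / h + 1, 1, one_pos, by linarith, by nlinarith⟩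

/-- The integer point `p` lies strictly inside the counterclockwise integer triangle `abc`. -/
def InLatticeTriangle (a b c p : ℤ × ℤ) : Prop :=
  0 < cross (b - a) (p - a) ∧ 0 < cross (c - b) (p - b) ∧ 0 < cross (a - c) (p - c)

lemma exists_inLatticeTriangle {a b c v : ℤ × ℤ} {d : ℕ} (hd : 0 < d) (hv : IsCoprime v.1 v.2)
    (hab : b - a = (d : ℤ) • v) (hbc : latticeLength (c - b) ≤ d) (hca : latticeLength (a - c) ≤ d)
    (hh : 3 ≤ cross v (c - a)) : ∃ p, InLatticeTriangle a b c p := by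
  obtain ⟨w, hvw⟩ := exists_cross_eq_one hv
  obtain ⟨s, h, hac⟩ := exists_eq_smul_add_smul hvw (c - a)
  have hbc' : c - b = (s - d) • v + h • w := by
    rw [← sub_sub_sub_cancel_right c b a, hac, hab]
    module
  have hca' : a - c = (-s) • v + (-h) • w := by
    rw [← neg_sub, hac]
    module
  have hvh : cross v (c - a) = h := by simpa [hac] using cross_smul_add_smul hvw 1 0 s h
  rw [hvh] at hh
  rw [hbc'] at hbc
  rw [hca'] at hca
  obtain ⟨x, y, hy, hxy, hxy'⟩ := exists_interior_lattice_point_normalized (s := s) (d := d)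
    (by exact_mod_cast hd) hh
    (fun hd1 ↦ IsCoprime.neg_neg_iff s h |>.1 <|
      isCoprime_of_latticeLength_smul_add_smul_le_one hvw (by lia) (by lia))
    (fun hd1 ↦ isCoprime_of_latticeLength_smul_add_smul_le_one hvw (by lia) (by lia))
  have hab' : b - a = (d : ℤ) • v + (0 : ℤ) • w := by rw [hab, zero_smul, add_zero]
  have hap : a + x • v + y • w - a = x • v + y • w := by module
  have hbp : a + x • v + y • w - b = (x - d) • v + y • w := by
    rw [← sub_sub_sub_cancel_right _ b a, hap, hab]
    module
  have hcp : a + x • v + y • w - c = (x - s) • v + (y - h) • w := by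
    rw [← sub_sub_sub_cancel_right _ c a, hap, hac]
    module
  refine ⟨a + x • v + y • w, ?_, ?_, ?_⟩
  · rw [hab', hap, cross_smul_add_smul hvw]
    nlinarith
  · rw [hbc', hbp, cross_smul_add_smul hvw]
    linarith
  · rw [hca', hcp, cross_smul_add_smul hvw]
    linarith

end Lattice

section IntegerGrid

/-- The integer points of the square `[1, m] × [1, m]`; `grid m` is its image in the plane. -/
def intGrid (m : ℕ) : Finset (ℤ × ℤ) := Finset.Icc (1, 1) ((m : ℤ), (m : ℤ))

/-- The points of the integer grid on the line of direction `v` and offset `i`. -/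
def latticeLine (m : ℕ) (v : ℤ × ℤ) (i : ℤ) : Finset (ℤ × ℤ) :=
  (intGrid m).filter fun p ↦ cross v p = i

lemma mem_intGrid {m : ℕ} {p : ℤ × ℤ} :
    p ∈ intGrid m ↔ (1 ≤ p.1 ∧ p.1 ≤ m) ∧ 1 ≤ p.2 ∧ p.2 ≤ m := by
  rw [intGrid, Finset.mem_Icc, Prod.le_def, Prod.le_def]
  exact and_and_and_comm

lemma mem_latticeLine {m : ℕ} {v : ℤ × ℤ} {i : ℤ} {p : ℤ × ℤ} :
    p ∈ latticeLine m v i ↔ p ∈ intGrid m ∧ cross v p = i :=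
  Finset.mem_filter

/- `p` is the mean of the vertices weighted by the areas opposite to them. -/
lemma InLatticeTriangle.mem_intGrid {m : ℕ} {a b c p : ℤ × ℤ} (h : InLatticeTriangle a b c p)
    (ha : a ∈ intGrid m) (hb : b ∈ intGrid m) (hc : c ∈ intGrid m) : p ∈ intGrid m := by
  obtain ⟨hγ, hα, hβ⟩ := h
  have hfst : (cross (c - b) (p - b) + cross (a - c) (p - c) + cross (b - a) (p - a)) * p.1 =
      cross (c - b) (p - b) * a.1 + cross (a - c) (p - c) * b.1 + cross (b - a) (p - a) * c.1 := by
    simp only [cross, Prod.fst_sub, Prod.snd_sub]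
    ring
  have hsnd : (cross (c - b) (p - b) + cross (a - c) (p - c) + cross (b - a) (p - a)) * p.2 =
      cross (c - b) (p - b) * a.2 + cross (a - c) (p - c) * b.2 + cross (b - a) (p - a) * c.2 := by
    simp only [cross, Prod.fst_sub, Prod.snd_sub]
    ring
  rw [_root_.mem_intGrid] at *
  refine ⟨⟨?_, ?_⟩, ?_, ?_⟩ <;> nlinarith

lemma card_le_div_add_one_of_dvd_sub {ι : Type*} {S : Finset ι} {g : ι → ℤ} {m r : ℕ} (hr : 0 < r)
    (hg : Set.InjOn g S) (hmem : ∀ i ∈ S, g i ∈ Finset.Icc 1 (m : ℤ))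
    (hdvd : ∀ i ∈ S, ∀ j ∈ S, (r : ℤ) ∣ g i - g j) : S.card ≤ m / r + 1 := by
  have hcard : (Finset.Icc (0 : ℤ) (m / r : ℕ)).card = m / r + 1 := by
    rw [Int.card_Icc]
    lia
  rw [← hcard]
  refine Finset.card_le_card_of_injOn (fun i ↦ g i / r) (fun i hi ↦ ?_) fun i hi j hj hij ↦ ?_
  · obtain ⟨hlow, hhigh⟩ := Finset.mem_Icc.1 (hmem i hi)
    rw [Finset.mem_coe, Finset.mem_Icc, Int.natCast_div]
    exact ⟨Int.ediv_nonneg (by lia) (by lia), Int.ediv_le_ediv (by lia) hhigh⟩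
  · have hmod : g i % r = g j % r := (Int.modEq_iff_dvd.2 (hdvd i hi j hj)).symm
    refine hg hi hj ?_
    rw [← Int.emod_add_mul_ediv (g i) r, ← Int.emod_add_mul_ediv (g j) r, hmod]
    exact congrArg _ (congrArg _ hij)

lemma mul_sub_eq_mul_sub_of_mem_latticeLine {m : ℕ} {v a b : ℤ × ℤ} {i : ℤ}
    (ha : a ∈ latticeLine m v i) (hb : b ∈ latticeLine m v i) :
    v.1 * (a.2 - b.2) = v.2 * (a.1 - b.1) := by
  have hab := (mem_latticeLine.1 ha).2.trans (mem_latticeLine.1 hb).2.symm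
  unfold cross at hab
  linear_combination hab

lemma injOn_fst_latticeLine {m : ℕ} {v : ℤ × ℤ} (hv : v.1 ≠ 0) (i : ℤ) :
    Set.InjOn Prod.fst (latticeLine m v i : Set (ℤ × ℤ)) := fun a ha b hb hab ↦ by
  have hline := mul_sub_eq_mul_sub_of_mem_latticeLine ha hb
  rw [hab, sub_self, mul_zero] at hline
  exact Prod.ext hab (sub_eq_zero.1 ((mul_eq_zero.1 hline).resolve_left hv))

lemma injOn_snd_latticeLine {m : ℕ} {v : ℤ × ℤ} (hv : v.2 ≠ 0) (i : ℤ) :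
    Set.InjOn Prod.snd (latticeLine m v i : Set (ℤ × ℤ)) := fun a ha b hb hab ↦ by
  have hline := mul_sub_eq_mul_sub_of_mem_latticeLine ha hb
  rw [hab, sub_self, mul_zero] at hline
  exact Prod.ext (sub_eq_zero.1 ((mul_eq_zero.1 hline.symm).resolve_left hv)) hab

lemma card_latticeLine_le {m r : ℕ} {v : ℤ × ℤ} (hr : r ≠ 0) (hv : IsCoprime v.1 v.2)
    (hvr : v ∈ Finset.box r) (i : ℤ) : (latticeLine m v i).card ≤ m / r + 1 := by
  rw [Int.mem_box] at hvr
  obtain hv1 | hv2 : v.1.natAbs = r ∨ v.2.natAbs = r := by lia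
  · refine card_le_div_add_one_of_dvd_sub (by lia) (injOn_fst_latticeLine (by lia) i)
      (fun a ha ↦ Finset.mem_Icc.2 (mem_intGrid.1 (mem_latticeLine.1 ha).1).1) fun a ha b hb ↦ ?_
    rw [← hv1, Int.natAbs_dvd]
    exact hv.dvd_of_dvd_mul_left ⟨_, (mul_sub_eq_mul_sub_of_mem_latticeLine ha hb).symm⟩
  · refine card_le_div_add_one_of_dvd_sub (by lia) (injOn_snd_latticeLine (by lia) i)
      (fun a ha ↦ Finset.mem_Icc.2 (mem_intGrid.1 (mem_latticeLine.1 ha).1).2) fun a ha b hb ↦ ?_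
    rw [← hv2, Int.natAbs_dvd]
    exact hv.symm.dvd_of_dvd_mul_left ⟨_, mul_sub_eq_mul_sub_of_mem_latticeLine ha hb⟩

end IntegerGrid

section HortonGrid

/-- The inclusion of the integer lattice in the plane. -/
def toPlane (p : ℤ × ℤ) : ℝ × ℝ := (p.1, p.2)

lemma toPlane_injective : Function.Injective toPlane := by
  rintro ⟨a, b⟩ ⟨c, d⟩ h
  simpa [toPlane] using h

lemma orient_toPlane (a b c : ℤ × ℤ) :
    orient (toPlane a) (toPlane b) (toPlane c) = (cross (b - a) (c - a) : ℤ) := by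
  simp [orient, toPlane, cross]

lemma grid_eq_image_toPlane (m : ℕ) : grid m = (intGrid m).image toPlane := by
  ext x
  simp only [grid, Finset.mem_image, Finset.mem_product, Finset.mem_Icc, mem_intGrid, Prod.exists]
  constructor
  · rintro ⟨i, j, hij, rfl⟩
    exact ⟨i, j, by lia, by simp [toPlane]⟩
  · rintro ⟨i, j, hij, rfl⟩
    lift i to ℕ using by lia
    lift j to ℕ using by lia
    exact ⟨i, j, by lia, by simp [toPlane]⟩

lemma toPlane_mem_grid {m : ℕ} {p : ℤ × ℤ} (hp : p ∈ intGrid m) : toPlane p ∈ grid m :=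
  grid_eq_image_toPlane m ▸ Finset.mem_image_of_mem _ hp

lemma gridLine_toPlane {m : ℕ} {v a b : ℤ × ℤ} {i : ℤ} (hv : v ≠ 0) (ha : a ∈ latticeLine m v i)
    (hb : b ∈ latticeLine m v i) (hab : a ≠ b) :
    gridLine m (toPlane a) (toPlane b) = (latticeLine m v i).image toPlane := by
  rw [mem_latticeLine] at ha hb
  have hvab : cross v (b - a) = 0 := by rw [cross_sub, ha.2, hb.2, sub_self]
  have hdot : dot v (b - a) ≠ 0 := fun h0 ↦
    hab (sub_eq_zero.1 (eq_zero_of_dot_eq_zero_of_cross_eq_zero hv h0 hvab)).symm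
  have hcollinear (p : ℤ × ℤ) :
      Collinear ℝ {toPlane a, toPlane b, toPlane p} ↔ cross v p = i := by
    have hmul := dot_self_mul_cross v (b - a) (p - a)
    rw [hvab, zero_mul, sub_zero] at hmul
    rw [collinear_triple_iff_orient_eq_zero, orient_toPlane, Int.cast_eq_zero,
      ← mul_eq_zero_iff_left (dot_self_pos hv).ne', hmul, mul_eq_zero_iff_left hdot,
      cross_sub, ha.2, sub_eq_zero]
  ext x
  simp only [gridLine, grid_eq_image_toPlane, Finset.mem_filter, Finset.mem_image, mem_latticeLine]
  grind

/-- A map `π` placing the points of the integer grid in the plane as those of a squared Horton set: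
it preserves nonzero orientations, and along every lattice line the images form a Horton set. -/
structure IsHortonGrid (m : ℕ) (π : ℤ × ℤ → ℝ × ℝ) : Prop where
  orient_pos {a b c : ℤ × ℤ} (ha : a ∈ intGrid m) (hb : b ∈ intGrid m) (hc : c ∈ intGrid m)
    (h : 0 < cross (b - a) (c - a)) : 0 < orient (π a) (π b) (π c)
  isHortonFamily {v : ℤ × ℤ} (hv : v ≠ 0) (i : ℤ) : IsHortonFamily π (dot v) (latticeLine m v i)

lemma lt_iff_lt_of_abs_sub_lt_half {i j : ℤ} {s t : ℝ} (hs : |s - i| < 1 / 2)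
    (ht : |t - j| < 1 / 2) (hst : i = j → s = t) : i < j ↔ s < t := by
  rw [abs_lt] at hs ht
  rcases lt_trichotomy i j with hij | rfl | hji
  · have : (i : ℝ) + 1 ≤ j := by exact_mod_cast hij
    exact iff_of_true hij (by linarith)
  · simp [hst rfl]
  · have : (j : ℝ) + 1 ≤ i := by exact_mod_cast hji
    exact iff_of_false hji.not_gt (by linarith)

lemma IsHorton.isHortonFamily_of_image {ι K : Type*} [LinearOrder K] {P g : ι → ℝ × ℝ} {κ : ι → K}
    {X : Finset ι} (h : IsHorton (X.image g)) (hg : Set.InjOn g X)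
    (hP : ∀ a b c, orient (P a) (P b) (P c) = orient (g a) (g b) (g c))
    (hκ : ∀ a ∈ X, ∀ b ∈ X, κ a < κ b ↔ (g a).1 < (g b).1) : IsHortonFamily P κ X :=
  h.isHortonFamily.comap hP hg hκ

lemma orient_rotCW (a b c : ℝ × ℝ) : orient (rotCW a) (rotCW b) (rotCW c) = orient a b c := by
  unfold orient rotCW
  ring

lemma rotCW_injective : Function.Injective rotCW := fun a b h ↦ by
  simp only [rotCW, Prod.mk.injEq, neg_inj] at h
  exact Prod.ext h.2 h.1

lemma abs_fst_sub_le_elen (p q : ℝ × ℝ) : |p.1 - q.1| ≤ elen p q :=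
  Real.abs_le_sqrt (le_add_of_nonneg_right (sq_nonneg _))

lemma abs_snd_sub_le_elen (p q : ℝ × ℝ) : |p.2 - q.2| ≤ elen p q :=
  Real.abs_le_sqrt (le_add_of_nonneg_left (sq_nonneg _))

namespace IsSquaredHorton

variable {m : ℕ} {ε : ℝ} {f : ℝ × ℝ → ℝ × ℝ}

lemma elen_lt_half (h : IsSquaredHorton m ε f) {p : ℤ × ℤ} (hp : p ∈ intGrid m) :
    elen (f (toPlane p)) (toPlane p) < 1 / 2 := by
  linarith [h.close _ (toPlane_mem_grid hp), h.eps_lt]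

lemma injOn_latticeLine (h : IsSquaredHorton m ε f) (v : ℤ × ℤ) (i : ℤ) :
    Set.InjOn (f ∘ toPlane) (latticeLine m v i) :=
  h.inj.comp toPlane_injective.injOn fun _ hp ↦ toPlane_mem_grid (mem_latticeLine.1 hp).1

lemma isHortonFamily_fst (h : IsSquaredHorton m ε f) {v a b : ℤ × ℤ} {i : ℤ} (hv : v.1 ≠ 0)
    (ha : a ∈ latticeLine m v i) (hb : b ∈ latticeLine m v i) (hab : a ≠ b) :
    IsHortonFamily (f ∘ toPlane) Prod.fst (latticeLine m v i) := by
  have hline := h.nonvertical _ (toPlane_mem_grid (mem_latticeLine.1 ha).1) _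
    (toPlane_mem_grid (mem_latticeLine.1 hb).1) (toPlane_injective.ne hab)
    (Int.cast_injective.ne ((injOn_fst_latticeLine hv i).ne ha hb hab))
  rw [gridLine_toPlane (fun h0 ↦ hv (by simp [h0])) ha hb hab, Finset.image_image] at hline
  refine hline.isHortonFamily_of_image (h.injOn_latticeLine v i) (fun _ _ _ ↦ rfl)
    fun p hp q hq ↦ ?_
  exact lt_iff_lt_of_abs_sub_lt_half
    ((abs_fst_sub_le_elen _ _).trans_lt (h.elen_lt_half (mem_latticeLine.1 hp).1))
    ((abs_fst_sub_le_elen _ _).trans_lt (h.elen_lt_half (mem_latticeLine.1 hq).1))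
    fun hpq ↦ by rw [injOn_fst_latticeLine hv i hp hq hpq]

lemma isHortonFamily_snd (h : IsSquaredHorton m ε f) {v a b : ℤ × ℤ} {i : ℤ} (hv1 : v.1 = 0)
    (hv2 : v.2 ≠ 0) (ha : a ∈ latticeLine m v i) (hb : b ∈ latticeLine m v i) (hab : a ≠ b) :
    IsHortonFamily (f ∘ toPlane) Prod.snd (latticeLine m v i) := by
  have hfst : a.1 = b.1 := by
    have hdir := mul_sub_eq_mul_sub_of_mem_latticeLine ha hb
    rw [hv1, zero_mul] at hdir
    exact sub_eq_zero.1 ((mul_eq_zero.1 hdir.symm).resolve_left hv2)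
  have hline := h.vertical _ (toPlane_mem_grid (mem_latticeLine.1 ha).1) _
    (toPlane_mem_grid (mem_latticeLine.1 hb).1) (toPlane_injective.ne hab) (congrArg Int.cast hfst)
  rw [gridLine_toPlane (fun h0 ↦ hv2 (by simp [h0])) ha hb hab, Finset.image_image,
    Finset.image_image] at hline
  refine hline.isHortonFamily_of_image (rotCW_injective.comp_injOn (h.injOn_latticeLine v i))
    (fun _ _ _ ↦ (orient_rotCW _ _ _).symm) fun p hp q hq ↦ ?_
  exact lt_iff_lt_of_abs_sub_lt_half
    ((abs_snd_sub_le_elen _ _).trans_lt (h.elen_lt_half (mem_latticeLine.1 hp).1))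
    ((abs_snd_sub_le_elen _ _).trans_lt (h.elen_lt_half (mem_latticeLine.1 hq).1))
    fun hpq ↦ by rw [injOn_snd_latticeLine hv2 i hp hq hpq]

lemma isHortonFamily_dot (h : IsSquaredHorton m ε f) {v : ℤ × ℤ} (hv : v ≠ 0) (i : ℤ) :
    IsHortonFamily (f ∘ toPlane) (dot v) (latticeLine m v i) := by
  have hvv := (dot_self_pos hv).ne'
  have hcross {p} (hp : p ∈ latticeLine m v i) {q} (hq : q ∈ latticeLine m v i) :
      cross v (q - p) = 0 := by
    rw [cross_sub, (mem_latticeLine.1 hp).2, (mem_latticeLine.1 hq).2, sub_self]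
  obtain hcard | hcard := le_or_gt (latticeLine m v i).card 1
  · exact .small (fun p hp q hq _ ↦ Finset.card_le_one.1 hcard p hp q hq) (by lia)
  obtain ⟨a, ha, b, hb, hab⟩ := Finset.one_lt_card.1 hcard
  by_cases hv1 : v.1 = 0
  · have hv2 : v.2 ≠ 0 := fun hv2 ↦ hv (Prod.ext hv1 hv2)
    refine (h.isHortonFamily_snd hv1 hv2 ha hb hab).of_proportional_key (s := v.2 * v.2)
      (t := v.2 * dot v v) (mul_self_pos.2 hv2) (mul_ne_zero hv2 hvv) fun p hp q hq ↦ ?_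
    rw [← dot_sub, ← Prod.snd_sub, mul_assoc, mul_assoc,
      snd_mul_dot_of_cross_eq_zero (hcross hp hq)]
  · refine (h.isHortonFamily_fst hv1 ha hb hab).of_proportional_key (s := v.1 * v.1)
      (t := v.1 * dot v v) (mul_self_pos.2 hv1) (mul_ne_zero hv1 hvv) fun p hp q hq ↦ ?_
    rw [← dot_sub, ← Prod.fst_sub, mul_assoc, mul_assoc,
      fst_mul_dot_of_cross_eq_zero (hcross hp hq)]

lemma isHortonGrid (h : IsSquaredHorton m ε f) : IsHortonGrid m (f ∘ toPlane) where
  orient_pos {a b c} ha hb hc habc := by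
    have hpos : 0 < orient (toPlane a) (toPlane b) (toPlane c) := by
      rw [orient_toPlane]
      exact_mod_cast habc
    exact (h.orient_iff _ (toPlane_mem_grid ha) _ (toPlane_mem_grid hb) _ (toPlane_mem_grid hc)
      hpos.ne').1 hpos
  isHortonFamily := h.isHortonFamily_dot

end IsSquaredHorton

end HortonGrid

section FlatTriples

/-- The stabbed triples over the integer grid whose first edge is directed along `v` and whose
apex lies on the lattice line carrying that edge or on one of the next two to its left. -/
def flatTriples (m : ℕ) (π : ℤ × ℤ → ℝ × ℝ) (q : ℝ × ℝ) (v : ℤ × ℤ) :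
    Finset ((ℤ × ℤ) × (ℤ × ℤ) × (ℤ × ℤ)) :=
  (stabbedTriples π (intGrid m) q).filter fun t ↦ 0 < dot v (t.2.1 - t.1) ∧
    cross v (t.2.1 - t.1) = 0 ∧ cross v (t.2.2 - t.1) ∈ Finset.Icc 0 2

variable {m : ℕ} {π : ℤ × ℤ → ℝ × ℝ} {q : ℝ × ℝ} {v a b c : ℤ × ℤ}

lemma mem_flatTriples : (a, b, c) ∈ flatTriples m π q v ↔
    (a, b, c) ∈ stabbedTriples π (intGrid m) q ∧ 0 < dot v (b - a) ∧ cross v (b - a) = 0 ∧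
      cross v (c - a) ∈ Finset.Icc 0 2 :=
  Finset.mem_filter

namespace IsHortonGrid

lemma orient_neg (h : IsHortonGrid m π) (ha : a ∈ intGrid m) (hb : b ∈ intGrid m)
    (hc : c ∈ intGrid m) (habc : cross (b - a) (c - a) < 0) : orient (π a) (π b) (π c) < 0 := by
  rw [orient_swap, neg_lt_zero]
  exact h.orient_pos hb ha hc (by rwa [cross_swap, neg_pos])

lemma inTriangle (h : IsHortonGrid m π) {p : ℤ × ℤ} (ha : a ∈ intGrid m) (hb : b ∈ intGrid m)
    (hc : c ∈ intGrid m) (hp : InLatticeTriangle a b c p) :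
    InTriangle (π a) (π b) (π c) (π p) := by
  have hpm := hp.mem_intGrid ha hb hc
  exact ⟨h.orient_pos ha hb hpm hp.1, h.orient_pos hb hc hpm hp.2.1, h.orient_pos hc ha hpm hp.2.2⟩

lemma isLeftOf_of_lt_cross (h : IsHortonGrid m π) {i : ℤ} (hv : v ≠ 0) (hc : c ∈ intGrid m)
    (hi : i < cross v c) : IsLeftOf π (dot v) (latticeLine m v i) (π c) := by
  intro a ha b hb hab
  rw [mem_latticeLine] at ha hb
  refine h.orient_pos ha.1 hb.1 hc (pos_of_mul_pos_right ?_ (dot_self_pos hv).le)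
  rw [dot_self_mul_cross, cross_sub v b, cross_sub, dot_sub, ha.2, hb.2, sub_self, zero_mul,
    sub_zero]
  exact mul_pos (sub_pos.2 hab) (sub_pos.2 hi)

lemma isRightOf_of_cross_lt (h : IsHortonGrid m π) {i : ℤ} (hv : v ≠ 0) (hc : c ∈ intGrid m)
    (hi : cross v c < i) : IsRightOf π (dot v) (latticeLine m v i) (π c) := by
  intro a ha b hb hab
  rw [mem_latticeLine] at ha hb
  refine h.orient_neg ha.1 hb.1 hc (neg_of_mul_neg_right ?_ (dot_self_pos hv).le)
  rw [dot_self_mul_cross, cross_sub v b, cross_sub, dot_sub, ha.2, hb.2, sub_self, zero_mul,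
    sub_zero]
  exact mul_neg_of_pos_of_neg (sub_pos.2 hab) (sub_neg.2 hi)

/- Otherwise the line through `a'` and `b'` would separate the two triangles, which share `q`. -/
lemma cross_le_of_mem_flatTriples (h : IsHortonGrid m π) (hv : v ≠ 0) {a' b' c' : ℤ × ℤ}
    (ht : (a, b, c) ∈ flatTriples m π q v) (ht' : (a', b', c') ∈ flatTriples m π q v) :
    cross v a' ≤ cross v a + 2 := by
  simp only [mem_flatTriples, mem_stabbedTriples, Finset.mem_Icc, cross_sub, dot_sub, sub_pos,
    sub_eq_zero] at ht ht'
  obtain ⟨⟨⟨ha, hb, hc⟩, hq, -⟩, -, hab, hac⟩ := ht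
  obtain ⟨⟨⟨ha', hb', -⟩, hq', -⟩, hdot, hab', -⟩ := ht'
  by_contra! hlt
  have hright {p} (hp : p ∈ intGrid m) (hpa : cross v p < cross v a') :
      orient (π a') (π b') (π p) < 0 :=
    h.isRightOf_of_cross_lt hv hp hpa a' (mem_latticeLine.2 ⟨ha', rfl⟩) b'
      (mem_latticeLine.2 ⟨hb', hab'⟩) hdot
  exact (hq.orient_neg (hright ha (by lia)) (hright hb (by lia)) (hright hc (by lia))).not_gt hq'.1

lemma card_flatTriples_filter_le (h : IsHortonGrid m π) (q : ℝ × ℝ) (hv : v ≠ 0) {K L : ℕ}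
    (hK : ∀ i, (latticeLine m v i).card ≤ K) (hL : K ≤ 2 ^ L) (i : ℤ) {j : ℤ} (hj : 0 ≤ j) :
    ((flatTriples m π q v).filter fun t ↦ (cross v t.1, cross v (t.2.2 - t.1)) = (i, j)).card ≤
      3 * K * L ^ 2 := by
  have hcell {a b c} (ht : (a, b, c) ∈ (flatTriples m π q v).filter fun t ↦
      (cross v t.1, cross v (t.2.2 - t.1)) = (i, j)) :
      (a, b, c) ∈ stabbedTriples π (intGrid m) q ∧ a ∈ latticeLine m v i ∧
        b ∈ latticeLine m v i ∧ c ∈ latticeLine m v (i + j) := by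
    simp only [Finset.mem_filter, mem_flatTriples, Prod.mk.injEq, cross_sub] at ht
    obtain ⟨⟨ht, -, hab, -⟩, hi, hj⟩ := ht
    obtain ⟨⟨ha, hb, hc⟩, -⟩ := mem_stabbedTriples.1 ht
    simp only [mem_latticeLine]
    exact ⟨ht, ⟨ha, hi⟩, ⟨hb, by lia⟩, hc, by lia⟩
  have hfamily := h.isHortonFamily hv i
  have hKL := (hK i).trans hL
  have hsub : latticeLine m v i ⊆ intGrid m := Finset.filter_subset _ _
  obtain rfl | hj := hj.eq_or_lt
  · refine (Finset.card_le_card (t := stabbedTriples π (latticeLine m v i) q) ?_).trans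
      ((hfamily.card_stabbedTriples_le hKL q).trans ?_)
    · rintro ⟨a, b, c⟩ ht
      obtain ⟨ht, ha, hb, hc⟩ := hcell ht
      exact mem_stabbedTriples_of_subset hsub ht ha hb (by rwa [add_zero] at hc)
    · gcongr
      exact hK i
  · refine (Finset.card_le_card
      (t := mixedTriples π (latticeLine m v i) (latticeLine m v (i + j)) q) ?_).trans
      ((card_mixedTriples_le (L := L) fun c hc ↦ ?_).trans ?_)
    · rintro ⟨a, b, c⟩ ht
      obtain ⟨ht, ha, hb, hc⟩ := hcell ht
      exact mem_mixedTriples_of_subset hsub ht ha hb hc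
    · obtain ⟨hc, hci⟩ := mem_latticeLine.1 hc
      exact hfamily.card_stabbedFan_le_of_isLeftOf hKL
        (h.isLeftOf_of_lt_cross hv hc (by lia)) q
    · exact Nat.mul_le_mul ((hK _).trans (Nat.le_mul_of_pos_left K three_pos))
        (Nat.le_self_pow two_ne_zero L)

lemma card_flatTriples_le (h : IsHortonGrid m π) (q : ℝ × ℝ) (hv : v ≠ 0) {K L : ℕ}
    (hK : ∀ i, (latticeLine m v i).card ≤ K) (hL : K ≤ 2 ^ L) :
    (flatTriples m π q v).card ≤ 27 * K * L ^ 2 := by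
  rcases (flatTriples m π q v).eq_empty_or_nonempty with h0 | hne
  · simp [h0]
  obtain ⟨⟨a, b, c⟩, ht, hmin⟩ := Finset.exists_min_image _ (fun t ↦ cross v t.1) hne
  calc (flatTriples m π q v).card
      ≤ 3 * K * L ^ 2 * (Finset.Icc (cross v a) (cross v a + 2) ×ˢ Finset.Icc (0 : ℤ) 2).card := by
        refine Finset.card_le_mul_card_image_of_maps_to
          (f := fun t ↦ (cross v t.1, cross v (t.2.2 - t.1))) ?_ _ ?_
        · rintro ⟨a', b', c'⟩ ht'
          exact Finset.mk_mem_product (Finset.mem_Icc.2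
            ⟨hmin _ ht', h.cross_le_of_mem_flatTriples hv ht ht'⟩) (mem_flatTriples.1 ht').2.2.2
        · rintro ⟨i, j⟩ hij
          exact h.card_flatTriples_filter_le q hv hK hL i
            (Finset.mem_Icc.1 (Finset.mem_product.1 hij).2).1
    _ = 27 * K * L ^ 2 := by
        have hthree (i : ℤ) : (Finset.Icc i (i + 2)).card = 3 := by
          rw [Int.card_Icc]
          lia
        rw [Finset.card_product, hthree, show (Finset.Icc (0 : ℤ) 2).card = 3 from hthree 0]
        ring

end IsHortonGrid

end FlatTriples

section Cover

/-- The primitive integer vectors of supremum norm `r`. -/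
def primitiveVectors (r : ℕ) : Finset (ℤ × ℤ) :=
  (Finset.box r).filter fun v ↦ IsCoprime v.1 v.2

lemma card_primitiveVectors_le {r : ℕ} (hr : r ≠ 0) : (primitiveVectors r).card ≤ 8 * r :=
  (Finset.card_filter_le _ _).trans (Int.card_box hr).le

lemma ne_zero_of_mem_primitiveVectors {r : ℕ} {v : ℤ × ℤ} (hv : v ∈ primitiveVectors r) :
    v ≠ 0 := by
  rintro rfl
  exact not_isCoprime_zero_zero (Finset.mem_filter.1 hv).2

lemma natAbs_sub_lt_of_mem_intGrid {m : ℕ} {a b : ℤ × ℤ} (ha : a ∈ intGrid m)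
    (hb : b ∈ intGrid m) : max (b - a).1.natAbs (b - a).2.natAbs < m := by
  rw [mem_intGrid] at ha hb
  simp only [Prod.fst_sub, Prod.snd_sub]
  lia

lemma exists_mem_primitiveVectors {m : ℕ} {a b : ℤ × ℤ} (ha : a ∈ intGrid m)
    (hb : b ∈ intGrid m) (hab : a ≠ b) :
    ∃ r ∈ Finset.Icc 1 m, ∃ v ∈ primitiveVectors r, b - a = (latticeLength (b - a) : ℤ) • v := by
  have hne := sub_ne_zero.2 hab.symm
  obtain ⟨v, hv, hvab⟩ := exists_eq_latticeLength_smul hne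
  have hlength := latticeLength_pos hne
  have hlt := natAbs_sub_lt_of_mem_intGrid ha hb
  rw [hvab] at hlt
  simp only [Prod.smul_fst, Prod.smul_snd, smul_eq_mul, Int.natAbs_mul, Int.natAbs_natCast,
    max_lt_iff] at hlt
  have hv0 : v.1.natAbs ≠ 0 ∨ v.2.natAbs ≠ 0 := by
    simpa only [ne_eq, Int.natAbs_eq_zero] using hv.ne_zero_or_ne_zero
  have h1 := Nat.le_mul_of_pos_left v.1.natAbs hlength
  have h2 := Nat.le_mul_of_pos_left v.2.natAbs hlength
  exact ⟨max v.1.natAbs v.2.natAbs, Finset.mem_Icc.2 (by lia), v,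
    Finset.mem_filter.2 ⟨Int.mem_box.2 rfl, hv⟩, hvab⟩

namespace IsHortonGrid

variable {m : ℕ} {π : ℤ × ℤ → ℝ × ℝ} {q : ℝ × ℝ}

lemma cross_nonneg_of_mem_stabbedTriples (h : IsHortonGrid m π) {a b c : ℤ × ℤ}
    (ht : (a, b, c) ∈ stabbedTriples π (intGrid m) q) : 0 ≤ cross (b - a) (c - a) := by
  obtain ⟨⟨ha, hb, hc⟩, hq, -⟩ := mem_stabbedTriples.1 ht
  by_contra! hneg
  exact (h.orient_neg ha hb hc hneg).not_gt hq.orient_pos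

/- If the apex were three or more lines away from the longest edge, the triangle would contain a
lattice point. -/
lemma exists_mem_flatTriples (h : IsHortonGrid m π) {a b c : ℤ × ℤ}
    (ht : (a, b, c) ∈ stabbedTriples π (intGrid m) q)
    (hbc : latticeLength (c - b) ≤ latticeLength (b - a))
    (hca : latticeLength (a - c) ≤ latticeLength (b - a)) :
    ∃ r ∈ Finset.Icc 1 m, ∃ v ∈ primitiveVectors r, (a, b, c) ∈ flatTriples m π q v := by
  obtain ⟨⟨ha, hb, hc⟩, hq, hempty⟩ := mem_stabbedTriples.1 ht
  have hab : a ≠ b := by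
    rintro rfl
    exact hq.orient_pos.ne' (orient_self_left _ _)
  obtain ⟨r, hr, v, hv, hvab⟩ := exists_mem_primitiveVectors ha hb hab
  refine ⟨r, hr, v, hv, mem_flatTriples.2 ⟨ht, ?_⟩⟩
  have hlength := latticeLength_pos (sub_ne_zero.2 hab.symm)
  have hdot : dot v (b - a) = latticeLength (b - a) * dot v v := by
    conv_lhs => rw [hvab]
    simp only [dot, Prod.smul_fst, Prod.smul_snd, smul_eq_mul]
    ring
  have hcross : cross v (b - a) = 0 := by
    rw [hvab]
    simp only [cross, Prod.smul_fst, Prod.smul_snd, smul_eq_mul]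
    ring
  have hcross' : cross (b - a) (c - a) = latticeLength (b - a) * cross v (c - a) := by
    conv_lhs => rw [hvab]
    simp only [cross, Prod.smul_fst, Prod.smul_snd, smul_eq_mul]
    ring
  have hvv := dot_self_pos (ne_zero_of_mem_primitiveVectors hv)
  refine ⟨by rw [hdot]; positivity, hcross, Finset.mem_Icc.2 ⟨?_, ?_⟩⟩
  · exact nonneg_of_mul_nonneg_right (hcross' ▸ h.cross_nonneg_of_mem_stabbedTriples ht)
      (by exact_mod_cast hlength)
  · by_contra! hthree
    obtain ⟨p, hp⟩ := exists_inLatticeTriangle hlength (Finset.mem_filter.1 hv).2 hvab hbc hca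
      hthree
    exact hempty p (hp.mem_intGrid ha hb hc) (h.inTriangle ha hb hc hp)

lemma card_stabbedTriples_le (h : IsHortonGrid m π) (q : ℝ × ℝ) :
    (stabbedTriples π (intGrid m) q).card ≤ 3 * ∑ r ∈ Finset.Icc 1 m,
      8 * r * (27 * (m / r + 1) * Nat.clog 2 (m / r + 1) ^ 2) := by
  refine (card_le_three_mul_of_perm (rotateTriple _) (M := (Finset.Icc 1 m).biUnion fun r ↦
    (primitiveVectors r).biUnion fun v ↦ flatTriples m π q v) ?_).trans
    (Nat.mul_le_mul_left 3 (Finset.card_biUnion_le.trans (Finset.sum_le_sum fun r hr ↦ ?_)))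
  · rintro ⟨a, b, c⟩ ht
    have ht' := rotateTriple_mem_stabbedTriples ht
    have ht'' := rotateTriple_mem_stabbedTriples ht'
    simp only [Finset.mem_biUnion]
    have hlongest : (latticeLength (c - b) ≤ latticeLength (b - a) ∧
        latticeLength (a - c) ≤ latticeLength (b - a)) ∨
        (latticeLength (a - c) ≤ latticeLength (c - b) ∧
          latticeLength (b - a) ≤ latticeLength (c - b)) ∨
        latticeLength (b - a) ≤ latticeLength (a - c) ∧
          latticeLength (c - b) ≤ latticeLength (a - c) := by lia
    exact hlongest.imp (fun hle ↦ h.exists_mem_flatTriples ht hle.1 hle.2) <|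
      Or.imp (fun hle ↦ h.exists_mem_flatTriples ht' hle.1 hle.2)
        fun hle ↦ h.exists_mem_flatTriples ht'' hle.1 hle.2
  · have hr0 : r ≠ 0 := Nat.one_le_iff_ne_zero.1 (Finset.mem_Icc.1 hr).1
    refine (Finset.card_biUnion_le_card_mul _ _ _ fun v hv ↦ ?_).trans
      (Nat.mul_le_mul_right _ (card_primitiveVectors_le hr0))
    obtain ⟨hbox, hcoprime⟩ := Finset.mem_filter.1 hv
    exact h.card_flatTriples_le q (ne_zero_of_mem_primitiveVectors hv)
      (card_latticeLine_le hr0 hcoprime hbox) (Nat.le_pow_clog one_lt_two _)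

end IsHortonGrid

end Cover

section Summation

lemma pow_le_pow_mul_two_pow (k n : ℕ) : n ^ k ≤ k ^ k * 2 ^ n := by
  obtain rfl | hk := k.eq_zero_or_pos
  · simpa using Nat.one_le_two_pow
  calc n ^ k ≤ (k * 2 ^ (n / k)) ^ k :=
        Nat.pow_le_pow_left ((Nat.lt_mul_div_succ n hk).le.trans
          (Nat.mul_le_mul_left k Nat.lt_two_pow_self)) k
    _ = k ^ k * 2 ^ (n / k * k) := by rw [mul_pow, ← pow_mul]
    _ ≤ k ^ k * 2 ^ n := by
        gcongr
        exacts [one_le_two, Nat.div_mul_le_self n k]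

lemma two_pow_clog_le (n : ℕ) (hn : n ≠ 0) : 2 ^ Nat.clog 2 n ≤ 2 * n := by
  obtain hn1 | hn1 : n = 1 ∨ 1 < n := by lia
  · simp [hn1]
  · rw [← Nat.succ_pred_eq_of_pos (Nat.clog_pos one_lt_two hn1), pow_succ']
    exact Nat.mul_le_mul_left 2 (Nat.pow_pred_clog_lt_self one_lt_two hn1).le

lemma clog_sq_le (n : ℕ) (hn : n ≠ 0) : (Nat.clog 2 n : ℝ) ^ 2 ≤ 16 * √(2 * n) := by
  have hpow : (Nat.clog 2 n : ℝ) ^ 4 ≤ 4 ^ 4 * (2 * n) := by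
    exact_mod_cast (pow_le_pow_mul_two_pow 4 (Nat.clog 2 n)).trans
      (Nat.mul_le_mul_left _ (two_pow_clog_le n hn))
  refine pow_le_pow_iff_left₀ (by positivity) (by positivity) two_ne_zero |>.1 ?_
  rw [mul_pow, Real.sq_sqrt (by positivity)]
  linarith

lemma mul_div_add_one_mul_clog_sq_le {m r : ℕ} (hr : r ≠ 0) (hrm : r ≤ m) :
    r * (m / r + 1 : ℕ) * (Nat.clog 2 (m / r + 1) : ℝ) ^ 2 ≤ 64 * m * √m * (1 / √r) := by
  have hr' : (0 : ℝ) < r := by positivity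
  have hmul : (r : ℝ) * (m / r + 1 : ℕ) ≤ 2 * m := by
    have := Nat.mul_div_le m r
    exact_mod_cast show r * (m / r + 1) ≤ 2 * m by lia
  have hsqrt : √(2 * (m / r + 1 : ℕ)) ≤ 2 * (√m * (1 / √r)) := by
    refine Real.sqrt_le_iff.2 ⟨by positivity, ?_⟩
    rw [mul_one_div, mul_pow, div_pow, Real.sq_sqrt hr'.le, Real.sq_sqrt m.cast_nonneg,
      ← mul_div_assoc, le_div_iff₀ hr']
    linarith
  calc r * (m / r + 1 : ℕ) * (Nat.clog 2 (m / r + 1) : ℝ) ^ 2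
      ≤ 2 * m * (16 * (2 * (√m * (1 / √r)))) := by
        gcongr
        exact (clog_sq_le _ (Nat.succ_ne_zero _)).trans (by gcongr)
    _ = 64 * m * √m * (1 / √r) := by ring

lemma sum_one_div_sqrt_le (m : ℕ) : ∑ r ∈ Finset.Icc 1 m, 1 / √(r : ℝ) ≤ 2 * √m := by
  induction m with
  | zero => simp
  | succ n ih =>
    have hpos : 0 < √((n + 1 : ℕ) : ℝ) := Real.sqrt_pos.2 (by positivity)
    have hsq : √((n + 1 : ℕ) : ℝ) ^ 2 = √(n : ℝ) ^ 2 + 1 := by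
      rw [Real.sq_sqrt (by positivity), Real.sq_sqrt (by positivity), Nat.cast_succ]
    have hterm : 1 / √((n + 1 : ℕ) : ℝ) ≤ 2 * (√((n + 1 : ℕ) : ℝ) - √(n : ℝ)) := by
      rw [div_le_iff₀ hpos]
      nlinarith [sq_nonneg (√((n + 1 : ℕ) : ℝ) - √(n : ℝ))]
    rw [Finset.sum_Icc_succ_top (by lia)]
    linarith

end Summation

lemma IsSquaredHorton.stabbedCount_le {m : ℕ} {ε : ℝ} {f : ℝ × ℝ → ℝ × ℝ}
    (h : IsSquaredHorton m ε f) (q : ℝ × ℝ) :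
    stabbedCount ↑((grid m).image f) q ≤ 3 * ∑ r ∈ Finset.Icc 1 m,
      8 * r * (27 * (m / r + 1) * Nat.clog 2 (m / r + 1) ^ 2) := by
  rw [grid_eq_image_toPlane, Finset.image_image]
  exact (stabbedCount_image_le _ _ q).trans (h.isHortonGrid.card_stabbedTriples_le q)

/-- Every point of the plane stabs `O(n)` empty triangles of a squared Horton set of
`n = m²` points. -/
theorem squared_horton_stabbed_bound :
    ∃ C : ℝ, 0 < C ∧ ∀ (m : ℕ) (ε : ℝ) (f : ℝ × ℝ → ℝ × ℝ),
      IsSquaredHorton m ε f → ∀ q : ℝ × ℝ,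
        (stabbedCount ↑((grid m).image f) q : ℝ) ≤ C * (m : ℝ) ^ 2 := by
  refine ⟨82944, by norm_num, fun m ε f h q ↦ ?_⟩
  calc (stabbedCount ↑((grid m).image f) q : ℝ)
      ≤ 3 * ∑ r ∈ Finset.Icc 1 m,
          8 * r * (27 * (m / r + 1 : ℕ) * (Nat.clog 2 (m / r + 1) : ℝ) ^ 2) := by
        exact_mod_cast h.stabbedCount_le q
    _ = 648 * ∑ r ∈ Finset.Icc 1 m,
          r * (m / r + 1 : ℕ) * (Nat.clog 2 (m / r + 1) : ℝ) ^ 2 := by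
        simp only [Finset.mul_sum]
        exact Finset.sum_congr rfl fun r _ ↦ by ring
    _ ≤ 648 * ∑ r ∈ Finset.Icc 1 m, 64 * m * √m * (1 / √r) := by
        gcongr 648 * ∑ r ∈ _, ?_ with r hr
        obtain ⟨hr1, hrm⟩ := Finset.mem_Icc.1 hr
        exact mul_div_add_one_mul_clog_sq_le (by lia) hrm
    _ ≤ 648 * (64 * m * √m * (2 * √m)) := by
        rw [← Finset.mul_sum]
        gcongr
        exact sum_one_div_sqrt_le m
    _ = 82944 * (m : ℝ) ^ 2 := by
        linear_combination 82944 * (m : ℝ) * Real.mul_self_sqrt m.cast_nonneg
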